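/- For every ε > 0 and every real p with 0 < p < 1 there exist b, d, δ > 0 such that for every n₀ there exist n ≥ n₀ and a (b,d)-expander 𝒢 on n vertices with a prescribed vertex v for which the random graph G ∼ 𝒢_p satisfies both: (i) the probability that the diameter of the connected component of v in G is at least (1−ε) times the diameter of 𝒢 is at least 1 − ε; and (ii) the probability that every connected component of G has at most n^{1−δ} vertices is at least 1 − ε. -/

import Mathlib

open scoped Classical symmDiff

noncomputable section

namespace Percolation

variable {V : Type} [Fintype V] [DecidableEq V]

/-- The edge set of `G` as a finset. -/
noncomputable def edgeFinset' (G : SimpleGraph V) : Finset (Sym2 V) :=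
  Finset.univ.filter (· ∈ G.edgeSet)

/-- Probability that bond percolation on `G` with parameter `p` produces a spanning
subgraph satisfying `P`. -/
noncomputable def percProb (G : SimpleGraph V) (p : ℝ) (P : SimpleGraph V → Prop) : ℝ :=
  ∑ s ∈ (edgeFinset' G).powerset,
    (p ^ s.card * (1 - p) ^ ((edgeFinset' G).card - s.card)) *
      (if P (SimpleGraph.fromEdgeSet (↑s)) then 1 else 0)

/-- Joint probability for two independent bond percolations on `G`. -/
noncomputable def percProb2 (G : SimpleGraph V) (p₁ p₂ : ℝ)
    (P : SimpleGraph V → SimpleGraph V → Prop) : ℝ :=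
  ∑ s ∈ (edgeFinset' G).powerset, ∑ t ∈ (edgeFinset' G).powerset,
    (p₁ ^ s.card * (1 - p₁) ^ ((edgeFinset' G).card - s.card)) *
    (p₂ ^ t.card * (1 - p₂) ^ ((edgeFinset' G).card - t.card)) *
      (if P (SimpleGraph.fromEdgeSet (↑s)) (SimpleGraph.fromEdgeSet (↑t)) then 1 else 0)

/-- Number of edges of `G` joining `S` to its complement. -/
noncomputable def cutCard (G : SimpleGraph V) (S : Finset V) : ℕ :=
  ((edgeFinset' G).filter (fun e => ∃ x ∈ S, ∃ y, y ∉ S ∧ e = s(x, y))).card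

/-- `G` is a `(b,d)`-expander: max degree at most `d`, and every vertex set of size at most
`n/2` has at least `b|S|` edges to its complement. -/
def IsExpander (G : SimpleGraph V) (b : ℝ) (d : ℕ) : Prop :=
  (∀ v, (G.neighborSet v).ncard ≤ d) ∧
  ∀ S : Finset V, (S.card : ℝ) ≤ Fintype.card V / 2 → b * S.card ≤ cutCard G S

/-- `G` is a regular `(b,d)`-expander. -/
def IsRegularExpander (G : SimpleGraph V) (b : ℝ) (d : ℕ) : Prop :=
  IsExpander G b d ∧ ∀ v, (G.neighborSet v).ncard = d

/-- The vertices of the connected component `c` of `G`. -/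
noncomputable def compVerts (G : SimpleGraph V) (c : G.ConnectedComponent) : Finset V :=
  Finset.univ.filter (fun v => G.connectedComponentMk v = c)

/-- The edges of the connected component `c` of `G`. -/
noncomputable def compEdges (G : SimpleGraph V) (c : G.ConnectedComponent) : Finset (Sym2 V) :=
  (edgeFinset' G).filter (fun e => ∀ v ∈ e, G.connectedComponentMk v = c)

/-- `c` is a largest connected component of `G`. -/
def IsLargestComp (G : SimpleGraph V) (c : G.ConnectedComponent) : Prop :=
  ∀ c' : G.ConnectedComponent, (compVerts G c').card ≤ (compVerts G c).card

/-- The 2-core of the connected component `c` of `G` : the maximal subgraph of `G`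
supported inside `c` all of whose vertices have degree at least 2. -/
noncomputable def twoCoreComp (G : SimpleGraph V) (c : G.ConnectedComponent) : SimpleGraph V :=
  sSup {H : SimpleGraph V | H ≤ G ∧ (∀ v ∈ H.support, G.connectedComponentMk v = c) ∧
    ∀ v ∈ H.support, 2 ≤ (H.neighborSet v).ncard}

/-- The event `A^R_{x,y}(H)`: the connected component of `y` in `H` with the edge `xy`
removed (if present) has at least `R` vertices. -/
def eventA (H : SimpleGraph V) (R : ℕ) (x y : V) : Prop :=
  R ≤ (compVerts (H.deleteEdges {s(x, y)})
        ((H.deleteEdges {s(x, y)}).connectedComponentMk y)).card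

/-- `E₁(H)`: edges `xy` of `H` such that `A^R_{x,y}` or `A^R_{y,x}` holds. -/
noncomputable def E1set (H : SimpleGraph V) (R : ℕ) : Finset (Sym2 V) :=
  (edgeFinset' H).filter (fun e => ∃ x y, e = s(x, y) ∧ (eventA H R x y ∨ eventA H R y x))

/-- `V₁(H)`: vertices `x` such that for some `y`, `xy ∈ E(H)` and `A^R_{x,y}` holds. -/
noncomputable def V1set (H : SimpleGraph V) (R : ℕ) : Finset V :=
  Finset.univ.filter (fun x => ∃ y, H.Adj x y ∧ eventA H R x y)

/-- `E₂(H)`: edges `xy` of `H` such that both `A^R_{x,y}` and `A^R_{y,x}` hold. -/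
noncomputable def E2set (H : SimpleGraph V) (R : ℕ) : Finset (Sym2 V) :=
  (edgeFinset' H).filter (fun e => ∃ x y, e = s(x, y) ∧ eventA H R x y ∧ eventA H R y x)

/-- `V₂(H)`: vertices incident to an edge of `E₂(H)`. -/
noncomputable def V2set (H : SimpleGraph V) (R : ℕ) : Finset V :=
  Finset.univ.filter (fun x => ∃ e ∈ E2set H R, x ∈ e)

/-- `V̄₁(H)`: vertices `y` such that `A^R_{x,y}(H)` holds for some `x`. -/
noncomputable def Vbar1 (H : SimpleGraph V) (R : ℕ) : Finset V :=
  Finset.univ.filter (fun y => ∃ x, eventA H R x y)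

/-- `S` is `k`-thick in `H`: a union of pairwise disjoint subsets, each of size at least
`k`, each inducing a connected subgraph of `H`. -/
def IsThick (H : SimpleGraph V) (k : ℕ) (S : Finset V) : Prop :=
  ∃ P : Finset (Finset V),
    (∀ T ∈ P, k ≤ T.card ∧ (H.induce (↑T : Set V)).Connected) ∧
    (↑P : Set (Finset V)).PairwiseDisjoint id ∧ S = P.biUnion id

/-- `S` is a separator of `K`. -/
def IsSeparator {W : Type} [Fintype W] (K : SimpleGraph W) (S : Finset W) : Prop :=
  ∃ A B : Finset W, Disjoint A B ∧ Disjoint A S ∧ Disjoint B S ∧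
    (∀ w, w ∈ A ∨ w ∈ B ∨ w ∈ S) ∧
    (∀ a ∈ A, ∀ b ∈ B, ¬ K.Adj a b) ∧
    3 * A.card ≤ 2 * Fintype.card W ∧ 3 * B.card ≤ 2 * Fintype.card W

section BernoulliSum

variable {α : Type*}

/-- Expectation of `f` over the random subset of `E` that keeps each element independently
with probability `p`. -/
def bernSum (p : ℝ) (E : Finset α) (f : Finset α → ℝ) : ℝ :=
  ∑ s ∈ E.powerset, (p ^ s.card * (1 - p) ^ (E.card - s.card)) * f s

lemma bernSum_add (p : ℝ) (E : Finset α) (f g : Finset α → ℝ) :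
    bernSum p E (fun s => f s + g s) = bernSum p E f + bernSum p E g := by
  simp [bernSum, mul_add, Finset.sum_add_distrib]

lemma bernSum_mul_left (p c : ℝ) (E : Finset α) (f : Finset α → ℝ) :
    bernSum p E (fun s => c * f s) = c * bernSum p E f := by
  simp only [bernSum, Finset.mul_sum]
  exact Finset.sum_congr rfl fun s _ => by ring

lemma bernSum_sum {ι : Type*} (p : ℝ) (E : Finset α) (t : Finset ι)
    (f : ι → Finset α → ℝ) :
    bernSum p E (fun s => ∑ i ∈ t, f i s) = ∑ i ∈ t, bernSum p E (f i) := by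
  simp only [bernSum, Finset.mul_sum]
  exact Finset.sum_comm

lemma bernSum_mono {p : ℝ} (hp0 : 0 ≤ p) (hp1 : p ≤ 1) {E : Finset α} {f g : Finset α → ℝ}
    (h : ∀ s ⊆ E, f s ≤ g s) : bernSum p E f ≤ bernSum p E g := by
  refine Finset.sum_le_sum fun s hs => mul_le_mul_of_nonneg_left (h s (Finset.mem_powerset.1 hs)) ?_
  have : 0 ≤ 1 - p := by linarith
  positivity

variable [DecidableEq α]

lemma bernSum_insert (p : ℝ) {E : Finset α} {e : α} (he : e ∉ E) (f : Finset α → ℝ) :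
    bernSum p (insert e E) f =
      p * bernSum p E (fun s => f (insert e s)) + (1 - p) * bernSum p E f := by
  unfold bernSum
  rw [Finset.sum_powerset_insert he, add_comm, Finset.mul_sum, Finset.mul_sum]
  congr 1
  · refine Finset.sum_congr rfl fun s hs => ?_
    have hs' := Finset.mem_powerset.1 hs
    rw [Finset.card_insert_of_notMem (fun h => he (hs' h)), Finset.card_insert_of_notMem he,
      Nat.add_sub_add_right, pow_succ]
    ring
  · refine Finset.sum_congr rfl fun s hs => ?_
    have hs' := Finset.card_le_card (Finset.mem_powerset.1 hs)
    rw [Finset.card_insert_of_notMem he, Nat.sub_add_comm hs', pow_succ]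
    ring

omit [DecidableEq α] in
lemma bernSum_empty (p : ℝ) (f : Finset α → ℝ) : bernSum p ∅ f = f ∅ := by
  simp [bernSum]

lemma bernSum_const (p c : ℝ) (E : Finset α) : bernSum p E (fun _ => c) = c := by
  induction E using Finset.induction_on with
  | empty => simp [bernSum_empty]
  | insert e E he ih => rw [bernSum_insert p he, ih]; ring

lemma bernSum_nonneg {p : ℝ} (hp0 : 0 ≤ p) (hp1 : p ≤ 1) {E : Finset α} {f : Finset α → ℝ}
    (h : ∀ s ⊆ E, 0 ≤ f s) : 0 ≤ bernSum p E f := by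
  simpa [bernSum_const] using bernSum_mono hp0 hp1 (f := fun _ => 0) h

/-- `f` does not depend on whether `e` belongs to its argument. -/
def Ignores {β : Sort*} (f : Finset α → β) (e : α) : Prop := ∀ s, f (insert e s) = f s

lemma Ignores.comp_insert {β : Sort*} {f : Finset α → β} {e : α} (h : Ignores f e) (e' : α) :
    Ignores (fun s => f (insert e' s)) e := fun s => by
  simp only
  rw [Finset.insert_comm, h]

/-- Functions depending on disjoint sets of coordinates are uncorrelated. -/
lemma bernSum_mul_of_ignores (p : ℝ) (E : Finset α) {f g : Finset α → ℝ}
    (h : ∀ e, Ignores f e ∨ Ignores g e) :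
    bernSum p E (fun s => f s * g s) = bernSum p E f * bernSum p E g := by
  induction E using Finset.induction_on generalizing f g with
  | empty => simp [bernSum_empty]
  | insert e E he ih =>
    simp only [bernSum_insert p he]
    rcases h e with hf | hg
    · have hf' : ∀ s, f (insert e s) = f s := hf
      simp only [hf']
      rw [ih h, ih fun e' => (h e').imp_right fun h' => h'.comp_insert e]
      ring
    · have hg' : ∀ s, g (insert e s) = g s := hg
      simp only [hg']
      rw [ih h, ih fun e' => (h e').imp_left fun h' => h'.comp_insert e]
      ring

lemma bernSum_mem (p : ℝ) {E : Finset α} {e : α} (he : e ∈ E) :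
    bernSum p E (fun s => if e ∈ s then 1 else 0) = p := by
  obtain ⟨E', he', rfl⟩ : ∃ E', e ∉ E' ∧ insert e E' = E :=
    ⟨E.erase e, by simp, Finset.insert_erase he⟩
  rw [bernSum_insert p he']
  have : bernSum p E' (fun s => if e ∈ s then (1 : ℝ) else 0) = bernSum p E' (fun _ => 0) :=
    Finset.sum_congr rfl fun s hs => by
      simp only [if_neg fun h => he' (Finset.mem_powerset.1 hs h)]
  rw [this]
  simp [bernSum_const]

lemma bernSum_subset (p : ℝ) {E F : Finset α} (hF : F ⊆ E) :
    bernSum p E (fun s => if F ⊆ s then 1 else 0) = p ^ F.card := by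
  induction F using Finset.induction_on with
  | empty => simp [bernSum_const]
  | insert e F he ih =>
    have h1 : (fun s : Finset α => if insert e F ⊆ s then (1 : ℝ) else 0) =
        fun s => (if e ∈ s then 1 else 0) * (if F ⊆ s then 1 else 0) := by
      funext s
      by_cases h1 : e ∈ s <;> by_cases h2 : F ⊆ s <;> simp [Finset.insert_subset_iff, h1, h2]
    rw [h1, bernSum_mul_of_ignores, bernSum_mem p (hF (Finset.mem_insert_self _ _)),
      ih fun x hx => hF (Finset.mem_insert_of_mem hx), Finset.card_insert_of_notMem he, pow_succ']
    intro e'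
    by_cases hee : e' = e
    · right
      intro s
      subst hee
      simp [Finset.subset_insert_iff_of_notMem he]
    · left
      intro s
      simp [Ne.symm hee]

lemma bernSum_disjoint (p : ℝ) {E F : Finset α} (hF : F ⊆ E) :
    bernSum p E (fun s => if ∀ e ∈ F, e ∉ s then 1 else 0) = (1 - p) ^ F.card := by
  induction F using Finset.induction_on with
  | empty => simp [bernSum_const]
  | insert e F he ih =>
    have h1 : (fun s : Finset α => if ∀ e' ∈ insert e F, e' ∉ s then (1 : ℝ) else 0) =
        fun s => (if e ∉ s then 1 else 0) * (if ∀ e ∈ F, e ∉ s then 1 else 0) := by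
      funext s
      simp only [Finset.forall_mem_insert, ite_and, mul_ite, mul_one, mul_zero]
      split_ifs <;> rfl
    have h2 : bernSum p E (fun s => if e ∉ s then (1 : ℝ) else 0) = 1 - p := by
      have h3 := bernSum_add p E (fun s => if e ∉ s then (1 : ℝ) else 0)
        (fun s => if e ∈ s then 1 else 0)
      rw [bernSum_mem p (hF (Finset.mem_insert_self _ _))] at h3
      have h4 : (fun s : Finset α => (if e ∉ s then (1 : ℝ) else 0) + if e ∈ s then 1 else 0) =
          fun _ => 1 := by
        funext s
        by_cases h : e ∈ s <;> simp [h]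
      rw [h4, bernSum_const] at h3
      linarith
    rw [h1, bernSum_mul_of_ignores, h2, ih fun x hx => hF (Finset.mem_insert_of_mem hx),
      Finset.card_insert_of_notMem he, pow_succ']
    intro e'
    by_cases hee : e' = e
    · right
      intro s
      subst hee
      have : ∀ x ∈ F, (x ∉ insert e' s ↔ x ∉ s) := fun x hx => by
        have : x ≠ e' := fun h => he (h ▸ hx)
        simp [this]
      simp only [forall₂_congr this]
    · left
      intro s
      simp [Ne.symm hee]

lemma bernSum_subset_mul (p : ℝ) {E F : Finset α} (hF : F ⊆ E) {g : Finset α → ℝ}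
    (hg : ∀ e ∈ F, Ignores g e) :
    bernSum p E (fun s => (if F ⊆ s then 1 else 0) * g s) = p ^ F.card * bernSum p E g := by
  rw [bernSum_mul_of_ignores, bernSum_subset p hF]
  intro e
  by_cases he : e ∈ F
  · exact Or.inr (hg e he)
  · exact Or.inl fun s => by simp only [Finset.subset_insert_iff_of_notMem he]

/-- The probability that the random subset of `E` satisfies `P`. -/
def bernProb (p : ℝ) (E : Finset α) (P : Finset α → Prop) : ℝ :=
  bernSum p E (fun s => if P s then 1 else 0)

omit [DecidableEq α] in
lemma bernProb_mono {p : ℝ} (hp0 : 0 ≤ p) (hp1 : p ≤ 1) {E : Finset α} {P Q : Finset α → Prop}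
    (h : ∀ s ⊆ E, P s → Q s) : bernProb p E P ≤ bernProb p E Q :=
  bernSum_mono hp0 hp1 fun s hs => by
    by_cases hP : P s
    · simp [hP, h s hs hP]
    · simp only [hP, if_false]; split_ifs <;> norm_num

lemma bernProb_nonneg {p : ℝ} (hp0 : 0 ≤ p) (hp1 : p ≤ 1) (E : Finset α) (P : Finset α → Prop) :
    0 ≤ bernProb p E P :=
  bernSum_nonneg hp0 hp1 fun s _ => by split_ifs <;> norm_num

omit [DecidableEq α] in
lemma bernProb_or_le {p : ℝ} (hp0 : 0 ≤ p) (hp1 : p ≤ 1) (E : Finset α) (P Q : Finset α → Prop) :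
    bernProb p E (fun s => P s ∨ Q s) ≤ bernProb p E P + bernProb p E Q := by
  unfold bernProb
  rw [← bernSum_add]
  exact bernSum_mono hp0 hp1 fun s _ => by
    by_cases hP : P s <;> by_cases hQ : Q s <;> simp [hP, hQ]

omit [DecidableEq α] in
lemma bernProb_exists_le {ι : Type*} {p : ℝ} (hp0 : 0 ≤ p) (hp1 : p ≤ 1) (E : Finset α)
    (t : Finset ι) (P : ι → Finset α → Prop) :
    bernProb p E (fun s => ∃ i ∈ t, P i s) ≤ ∑ i ∈ t, bernProb p E (P i) := by
  unfold bernProb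
  rw [← bernSum_sum]
  refine bernSum_mono hp0 hp1 fun s _ => ?_
  have h0 : ∀ i ∈ t, (0 : ℝ) ≤ if P i s then 1 else 0 := fun i _ => by split_ifs <;> norm_num
  split_ifs with h
  · obtain ⟨i, hi, hP⟩ := h
    simpa [hP] using Finset.single_le_sum h0 hi
  · exact Finset.sum_nonneg h0

lemma bernProb_not (p : ℝ) (E : Finset α) (P : Finset α → Prop) :
    bernProb p E (fun s => ¬ P s) = 1 - bernProb p E P := by
  have h := bernSum_add p E (fun s => if ¬ P s then (1 : ℝ) else 0) (fun s => if P s then 1 else 0)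
  have h4 : (fun s : Finset α => (if ¬ P s then (1 : ℝ) else 0) + if P s then 1 else 0) =
      fun _ => 1 := by
    funext s
    by_cases h : P s <;> simp [h]
  rw [h4, bernSum_const] at h
  have h5 : bernProb p E (fun s => ¬ P s) = bernSum p E (fun s => if ¬ P s then 1 else 0) := by
    unfold bernProb
    congr!
  rw [h5, bernProb]
  linarith

lemma bernProb_and_of_ignores (p : ℝ) (E : Finset α) {P Q : Finset α → Prop}
    (h : ∀ e, Ignores P e ∨ Ignores Q e) :
    bernProb p E (fun s => P s ∧ Q s) = bernProb p E P * bernProb p E Q := by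
  unfold bernProb
  rw [← bernSum_mul_of_ignores]
  · congr 1
    funext s
    by_cases hP : P s <;> by_cases hQ : Q s <;> simp [hP, hQ]
  · exact fun e => (h e).imp (fun h s => by simp only [h s]) (fun h s => by simp only [h s])

omit [DecidableEq α] in
/-- Markov's inequality for the random subset of `E`. -/
lemma bernProb_lt_le {p : ℝ} (hp0 : 0 ≤ p) (hp1 : p ≤ 1) {E : Finset α} {f : Finset α → ℝ}
    (hf : ∀ s, 0 ≤ f s) {c : ℝ} (hc : 0 < c) :
    bernProb p E (fun s => c < f s) ≤ bernSum p E f / c := by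
  rw [div_eq_inv_mul, ← bernSum_mul_left]
  refine bernSum_mono hp0 hp1 fun s _ => ?_
  split_ifs with h
  · rw [← div_eq_inv_mul, le_div_iff₀ hc]
    linarith
  · have := hf s
    positivity

end BernoulliSum

section PermutationExpander

open Finset

lemma card_perm_fixing {α : Type*} [Fintype α] [DecidableEq α] (S : Finset α) :
    Fintype.card {σ : Equiv.Perm α // ∀ x ∈ S, σ x = x} =
      (Fintype.card α - S.card).factorial := by
  have h := Fintype.card_congr (Equiv.Perm.subtypeEquivSubtypePerm (fun x => x ∉ S))
  rw [Fintype.card_perm, Fintype.card_subtype_compl, Fintype.card_coe] at h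
  rw [h]
  exact Fintype.card_congr (Equiv.subtypeEquivRight fun σ => by simp)

lemma card_perm_mapsTo_le {α : Type*} [Fintype α] [DecidableEq α] (S T : Finset α) :
    Fintype.card {σ : Equiv.Perm α // ∀ x ∈ S, σ x ∈ T} ≤
      (Fintype.card α - S.card).factorial * T.card.descFactorial S.card := by
  let f : {σ : Equiv.Perm α // ∀ x ∈ S, σ x ∈ T} → (S ↪ T) := fun σ =>
    ⟨fun x => ⟨σ.1 x.1, σ.2 x.1 x.2⟩, fun x y h =>
      Subtype.ext (σ.1.injective (congrArg Subtype.val h))⟩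
  have h := Finset.card_le_mul_card_image_of_maps_to (s := univ) (t := univ) (f := f)
    (fun _ _ => mem_univ _) (Fintype.card α - S.card).factorial ?_
  · simpa [Fintype.card_embedding_eq] using h
  · intro b _
    rcases (univ.filter fun a => f a = b).eq_empty_or_nonempty with h0 | ⟨a₀, ha₀⟩
    · simp [h0]
    · rw [← card_perm_fixing S, ← Finset.card_univ]
      have ha₀' : f a₀ = b := by simpa using ha₀
      have key : ∀ a, f a = b → ∀ x ∈ S, (a₀.1⁻¹ * a.1) x = x := by
        intro a ha x hx
        have : (f a ⟨x, hx⟩ : α) = f a₀ ⟨x, hx⟩ := by rw [ha, ha₀']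
        have h2 : a.1 x = a₀.1 x := this
        simp [h2]
      refine Finset.card_le_card_of_injOn
        (fun a => if h : f a = b then ⟨a₀.1⁻¹ * a.1, key a h⟩ else ⟨1, by simp⟩)
        (fun _ _ => mem_univ _) ?_
      intro a ha a' ha' h
      have ha1 : f a = b := by simpa using ha
      have ha2 : f a' = b := by simpa using ha'
      simp only [ha1, ha2, dif_pos, Subtype.mk.injEq] at h
      exact Subtype.ext (mul_left_cancel h)

lemma descFactorial_mul_pow_le {t n : ℕ} (h : t ≤ n) (s : ℕ) :
    t.descFactorial s * n ^ s ≤ t ^ s * n.descFactorial s := by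
  induction s with
  | zero => simp
  | succ s ih =>
    rw [Nat.descFactorial_succ, Nat.descFactorial_succ, pow_succ, pow_succ]
    have h1 : (t - s) * n ≤ t * (n - s) := by
      rw [Nat.sub_mul, Nat.mul_sub]
      have : t * s ≤ s * n := by rw [mul_comm]; exact Nat.mul_le_mul_left _ h
      omega
    calc (t - s) * t.descFactorial s * (n ^ s * n)
        = ((t - s) * n) * (t.descFactorial s * n ^ s) := by ring
      _ ≤ (t * (n - s)) * (t ^ s * n.descFactorial s) := Nat.mul_le_mul h1 ih
      _ = _ := by ring

lemma card_perm_mapsTo_le_real {α : Type*} [Fintype α] [DecidableEq α] [Nonempty α]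
    (S T : Finset α) :
    (Fintype.card {σ : Equiv.Perm α // ∀ x ∈ S, σ x ∈ T} : ℝ) ≤
      (Fintype.card α).factorial * ((T.card : ℝ) / Fintype.card α) ^ S.card := by
  have hpos : (0 : ℝ) < Fintype.card α := by exact_mod_cast Fintype.card_pos
  rw [div_pow, mul_div_assoc', le_div_iff₀ (by positivity)]
  have h1 := card_perm_mapsTo_le S T
  have h2 := descFactorial_mul_pow_le (card_le_univ T) S.card
  have h3 := Nat.factorial_mul_descFactorial (card_le_univ S)
  have : Fintype.card {σ : Equiv.Perm α // ∀ x ∈ S, σ x ∈ T} * Fintype.card α ^ S.card ≤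
      (Fintype.card α).factorial * T.card ^ S.card := by
    calc _ ≤ (Fintype.card α - S.card).factorial * T.card.descFactorial S.card *
          Fintype.card α ^ S.card := Nat.mul_le_mul_right _ h1
      _ = (Fintype.card α - S.card).factorial * (T.card.descFactorial S.card *
          Fintype.card α ^ S.card) := by ring
      _ ≤ (Fintype.card α - S.card).factorial *
          (T.card ^ S.card * (Fintype.card α).descFactorial S.card) := Nat.mul_le_mul_left _ h2
      _ = _ := by rw [← h3]; ring
  exact_mod_cast this

lemma choose_le_three_mul_div_pow (n k : ℕ) (hk : 0 < k) :
    (n.choose k : ℝ) ≤ (3 * n / k) ^ k := by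
  have hk' : (0 : ℝ) < k := by exact_mod_cast hk
  have h1 : (n.choose k : ℝ) ≤ n ^ k / k.factorial := Nat.choose_le_pow_div k n
  have h2 : (k : ℝ) ^ k / k.factorial ≤ 3 ^ k := by
    refine (Real.pow_div_factorial_le_exp k hk'.le k).trans ?_
    rw [← mul_one (k : ℝ), Real.exp_nat_mul]
    exact pow_le_pow_left₀ (Real.exp_pos _).le (Real.exp_one_lt_d9.le.trans (by norm_num)) _
  refine h1.trans ?_
  have hf : (0 : ℝ) < k.factorial := by positivity
  rw [div_le_iff₀ hf] at h2
  rw [div_pow, mul_pow, div_le_div_iff₀ hf (by positivity)]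
  calc (n : ℝ) ^ k * k ^ k ≤ n ^ k * (3 ^ k * k.factorial) := by gcongr
    _ = _ := by ring

lemma choose_mul_choose_mul_pow_le (n s : ℕ) (hs : 0 < s) (hsn : 2 * s ≤ n) :
    (n.choose s : ℝ) * (n.choose (s + s / 2) : ℝ) *
      ((((s + s / 2 : ℕ) : ℝ) / n) ^ s) ^ 30 ≤ (1 / 4) ^ s := by
  have hs' : (0 : ℝ) < s := by exact_mod_cast hs
  have hn' : (0 : ℝ) < n := by exact_mod_cast (by omega : 0 < n)
  have hsn' : (2 * s : ℝ) ≤ n := by exact_mod_cast hsn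
  set y : ℝ := s / n with hy
  have hy0 : 0 < y := by positivity
  have hy1 : y ≤ 1 / 2 := by rw [hy, div_le_iff₀ hn']; linarith
  have h1 : (n.choose s : ℝ) ≤ (3 / y) ^ s := by
    have := choose_le_three_mul_div_pow n s hs
    rwa [show (3 * n / s : ℝ) = 3 / y by rw [hy]; field_simp] at this
  have h2 : (n.choose (s + s / 2) : ℝ) ≤ (3 / y) ^ (2 * s) := by
    refine (choose_le_three_mul_div_pow n (s + s / 2) (by omega)).trans ?_
    have h3y : 1 ≤ 3 / y := by rw [le_div_iff₀ hy0]; linarith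
    refine le_trans (pow_le_pow_left₀ (by positivity) ?_ _)
      (pow_le_pow_right₀ h3y (by omega : s + s / 2 ≤ 2 * s))
    rw [show (3 / y : ℝ) = 3 * n / s by rw [hy]; field_simp]
    apply div_le_div_of_nonneg_left (by positivity) hs'
    exact_mod_cast Nat.le_add_right _ _
  have h3 : ((s + s / 2 : ℕ) : ℝ) / n ≤ 3 / 2 * y := by
    rw [hy, div_le_iff₀ hn', mul_assoc, div_mul_cancel₀ _ hn'.ne']
    have : 2 * (s + s / 2) ≤ 3 * s := by omega
    have : (2 * (s + s / 2 : ℕ) : ℝ) ≤ 3 * s := by exact_mod_cast this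
    linarith
  calc _ ≤ (3 / y) ^ s * (3 / y) ^ (2 * s) * ((3 / 2 * y) ^ s) ^ 30 := by gcongr
    _ = (27 * (27 / 8) * (3 / 2 * y) ^ 27) ^ s := by
      rw [← pow_mul, mul_comm s 30, pow_mul, pow_mul, ← mul_pow, ← mul_pow]
      congr 1
      field_simp
      ring
    _ ≤ (1 / 4) ^ s := by
      apply pow_le_pow_left₀ (by positivity)
      have : (3 / 2 * y) ^ 27 ≤ (3 / 4 : ℝ) ^ 27 := by gcongr; linarith
      refine (mul_le_mul_of_nonneg_left this (by norm_num)).trans ?_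
      norm_num

/-- There are thirty permutations of `Fin N` whose union expands every set of at most `N / 2`
points by a factor `3 / 2`. -/
theorem exists_expanding_perms (N : ℕ) :
    ∃ π : Fin 30 → Equiv.Perm (Fin N), ∀ S : Finset (Fin N), 2 * S.card ≤ N →
      3 * S.card ≤ 2 * (univ.biUnion fun i => S.image (π i)).card := by
  by_contra! hcon
  rcases Nat.eq_zero_or_pos N with rfl | hN
  · obtain ⟨S, -, h⟩ := hcon fun _ => 1
    have : S = ∅ := by ext x; exact x.elim0
    simp [this] at h
  have : Nonempty (Fin N) := ⟨⟨0, hN⟩⟩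
  let A : Finset (Fin N) → Finset (Fin N) → Finset (Fin 30 → Equiv.Perm (Fin N)) := fun S T =>
    Fintype.piFinset fun _ => univ.filter fun σ => ∀ x ∈ S, σ x ∈ T
  have hcover : (univ : Finset (Fin 30 → Equiv.Perm (Fin N))) ⊆
      (Icc 1 (N / 2)).biUnion fun s => (powersetCard s univ).biUnion fun S =>
        (powersetCard (s + s / 2) univ).biUnion fun T => A S T := by
    intro π _
    obtain ⟨S, hS, hlt⟩ := hcon π
    obtain ⟨T, hT1, hT2⟩ := Finset.exists_superset_card_eq
      (s := univ.biUnion fun i => S.image (π i)) (n := S.card + S.card / 2) (by omega)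
      (by simp only [Fintype.card_fin]; omega)
    simp only [mem_biUnion]
    refine ⟨S.card, mem_Icc.2 ⟨by omega, by omega⟩, S, mem_powersetCard.2 ⟨subset_univ _, rfl⟩, T,
      mem_powersetCard.2 ⟨subset_univ _, hT2⟩, ?_⟩
    simp only [A, Fintype.mem_piFinset, mem_filter, mem_univ, true_and]
    intro i x hx
    exact hT1 (mem_biUnion.2 ⟨i, mem_univ _, mem_image_of_mem _ hx⟩)
  have hA : ∀ S T : Finset (Fin N), ((A S T).card : ℝ) ≤
      (N.factorial : ℝ) ^ 30 * (((T.card : ℝ) / N) ^ S.card) ^ 30 := by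
    intro S T
    have h := card_perm_mapsTo_le_real S T
    rw [Fintype.card_fin, Fintype.card_subtype] at h
    simp only [A, Fintype.card_piFinset, prod_const, card_univ, Fintype.card_fin]
    rw [← mul_pow]
    push_cast
    exact pow_le_pow_left₀ (by positivity) h _
  have hcard := Finset.card_le_card hcover
  have h1 : ((N.factorial : ℝ)) ^ 30 ≤ ∑ s ∈ Icc 1 (N / 2), (N.factorial : ℝ) ^ 30 * (1 / 4) ^ s := by
    calc ((N.factorial : ℝ)) ^ 30
        = ((univ : Finset (Fin 30 → Equiv.Perm (Fin N))).card : ℝ) := by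
          simp [Fintype.card_perm]
      _ ≤ ∑ s ∈ Icc 1 (N / 2), ∑ S ∈ powersetCard s (univ : Finset (Fin N)),
          ∑ T ∈ powersetCard (s + s / 2) (univ : Finset (Fin N)), ((A S T).card : ℝ) := by
          refine (Nat.cast_le.2 hcard).trans ?_
          refine (Nat.cast_le.2 card_biUnion_le).trans ?_
          push_cast
          refine sum_le_sum fun s _ => (Nat.cast_le.2 card_biUnion_le).trans ?_
          push_cast
          refine sum_le_sum fun S _ => (Nat.cast_le.2 card_biUnion_le).trans ?_
          push_cast
          rfl
      _ ≤ ∑ s ∈ Icc 1 (N / 2), ∑ S ∈ powersetCard s (univ : Finset (Fin N)),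
          ∑ T ∈ powersetCard (s + s / 2) (univ : Finset (Fin N)),
            (N.factorial : ℝ) ^ 30 * ((((s + s / 2 : ℕ) : ℝ) / N) ^ s) ^ 30 := by
          refine sum_le_sum fun s _ => sum_le_sum fun S hS => sum_le_sum fun T hT => ?_
          have := hA S T
          rwa [(mem_powersetCard.1 hS).2, (mem_powersetCard.1 hT).2] at this
      _ ≤ _ := by
          refine sum_le_sum fun s hs => ?_
          rw [mem_Icc] at hs
          simp only [sum_const, card_powersetCard, card_univ, Fintype.card_fin, nsmul_eq_mul]
          have := choose_mul_choose_mul_pow_le N s (by omega) (by omega)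
          calc _ = (N.factorial : ℝ) ^ 30 * ((N.choose s : ℝ) * (N.choose (s + s / 2) : ℝ) *
              ((((s + s / 2 : ℕ) : ℝ) / N) ^ s) ^ 30) := by ring
            _ ≤ _ := by gcongr
  rw [← mul_sum] at h1
  have h2 : ∀ k : ℕ, ∑ s ∈ Icc 1 k, (1 / 4 : ℝ) ^ s ≤ 1 / 3 - (1 / 3) * (1 / 4) ^ k := by
    intro k
    induction k with
    | zero => simp
    | succ k ih => rw [Finset.sum_Icc_succ_top (by omega), pow_succ]; linarith
  have h3 : ∑ s ∈ Icc 1 (N / 2), (1 / 4 : ℝ) ^ s ≤ 1 / 3 :=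
    (h2 _).trans (by linarith [pow_pos (by norm_num : (0 : ℝ) < 1 / 4) (N / 2)])
  have h4 : (0 : ℝ) < (N.factorial : ℝ) ^ 30 := by positivity
  nlinarith

end PermutationExpander

section SegmentClusters

open Finset

variable {α X ι : Type*}

/-- `a` and `b` are vertices of `Y` joined by a segment all of whose elements are in `s`. The
segment `F a i` joins `a` to `π i a`. -/
def SegStep (π : ι → Equiv.Perm X) (F : X → ι → Finset α) (Y : Finset X) (s : Finset α)
    (a b : X) : Prop :=
  a ∈ Y ∧ b ∈ Y ∧ ∃ i, (π i a = b ∧ F a i ⊆ s) ∨ (π i b = a ∧ F b i ⊆ s)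

variable {π : ι → Equiv.Perm X} {F : X → ι → Finset α}

lemma SegStep.symm {Y : Finset X} {s : Finset α} {a b : X} (h : SegStep π F Y s a b) :
    SegStep π F Y s b a := by
  obtain ⟨ha, hb, i, h⟩ := h
  exact ⟨hb, ha, i, h.symm⟩

variable [Fintype X]

/-- The vertices that can be reached from `x` along fully open segments inside `Y`. -/
def segCluster (π : ι → Equiv.Perm X) (F : X → ι → Finset α) (Y : Finset X) (x : X)
    (s : Finset α) : Finset X :=
  univ.filter fun y => Relation.ReflTransGen (SegStep π F Y s) x y

lemma self_mem_segCluster (Y : Finset X) (x : X) (s : Finset α) : x ∈ segCluster π F Y x s := by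
  simp [segCluster, Relation.ReflTransGen.refl]

lemma segCluster_eq_of_mem {Y : Finset X} {x y : X} {s : Finset α}
    (h : y ∈ segCluster π F Y x s) : segCluster π F Y y s = segCluster π F Y x s := by
  have h1 : Relation.ReflTransGen (SegStep π F Y s) x y := by simpa [segCluster] using h
  have h2 : Relation.ReflTransGen (SegStep π F Y s) y x :=
    by
    clear h
    induction h1 with
    | refl => exact .refl
    | tail _ hbc ih => exact .head hbc.symm ih
  ext z
  simp only [segCluster, mem_filter, mem_univ, true_and]
  exact ⟨h1.trans, h2.trans⟩

lemma segCluster_of_notMem {Y : Finset X} {x : X} (hx : x ∉ Y) (s : Finset α) :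
    segCluster π F Y x s = {x} := by
  ext z
  simp only [segCluster, mem_filter, mem_univ, true_and, mem_singleton]
  refine ⟨fun h => ?_, fun h => h ▸ .refl⟩
  rcases Relation.ReflTransGen.cases_head h with h | ⟨w, h, -⟩
  · exact h.symm
  · exact absurd h.1 hx

lemma mem_segCluster_cases {Y : Finset X} {x b : X} {s : Finset α}
    (h : b ∈ segCluster π F Y x s) :
    b = x ∨ ∃ w, SegStep π F Y s x w ∧ b ∈ segCluster π F (Y.erase x) w s := by
  simp only [segCluster, mem_filter, mem_univ, true_and] at h ⊢
  induction h with
  | refl => exact Or.inl rfl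
  | @tail b c hb hc ih =>
    by_cases hcx : c = x
    · exact Or.inl hcx
    right
    by_cases hbx : b = x
    · subst hbx
      exact ⟨c, hc, .refl⟩
    · rcases ih with rfl | ⟨w, hw, hwb⟩
      · exact absurd rfl hbx
      · exact ⟨w, hw, hwb.tail ⟨mem_erase.2 ⟨hbx, hc.1⟩, mem_erase.2 ⟨hcx, hc.2.1⟩, hc.2.2⟩⟩

variable [DecidableEq α]

lemma ignores_segCluster {Y : Finset X} {e : α}
    (h : ∀ a i, a ∈ Y → π i a ∈ Y → e ∉ F a i) (w : X) :
    Ignores (segCluster π F Y w) e := by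
  intro s
  have : SegStep π F Y (insert e s) = SegStep π F Y s := by
    funext a b
    apply propext
    unfold SegStep
    refine and_congr_right fun ha => and_congr_right fun hb => exists_congr fun i => ?_
    refine or_congr (and_congr_right fun hab => ?_) (and_congr_right fun hab => ?_)
    · rw [subset_insert_iff_of_notMem (h a i ha (hab ▸ hb))]
    · rw [subset_insert_iff_of_notMem (h b i hb (hab ▸ ha))]
  simp only [segCluster, this]

variable [Fintype ι]

lemma card_segCluster_le (Y : Finset X) (x : X) (s : Finset α) :
    ((segCluster π F Y x s).card : ℝ) ≤
      1 + (∑ i, (if F x i ⊆ s then 1 else 0) *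
          ((segCluster π F (Y.erase x) (π i x) s).card : ℝ) +
        ∑ i, (if F ((π i).symm x) i ⊆ s then 1 else 0) *
          ((segCluster π F (Y.erase x) ((π i).symm x) s).card : ℝ)) := by
  have hsub : segCluster π F Y x s ⊆ {x} ∪
      ((univ.biUnion fun i => if F x i ⊆ s then segCluster π F (Y.erase x) (π i x) s else ∅) ∪
       (univ.biUnion fun i => if F ((π i).symm x) i ⊆ s then
          segCluster π F (Y.erase x) ((π i).symm x) s else ∅)) := by
    intro b hb
    rcases mem_segCluster_cases hb with rfl | ⟨w, ⟨-, -, i, h | h⟩, hw⟩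
    · simp
    · obtain ⟨rfl, h⟩ := h
      refine mem_union_right _ (mem_union_left _ (mem_biUnion.2 ⟨i, mem_univ _, ?_⟩))
      rwa [if_pos h]
    · obtain ⟨rfl, h⟩ := h
      refine mem_union_right _ (mem_union_right _ (mem_biUnion.2 ⟨i, mem_univ _, ?_⟩))
      rw [Equiv.symm_apply_apply, if_pos h]
      exact hw
  have h1 := card_le_card hsub
  have h2 := h1.trans ((card_union_le _ _).trans (Nat.add_le_add_left
    ((card_union_le _ _).trans (Nat.add_le_add card_biUnion_le card_biUnion_le)) _))
  refine (Nat.cast_le.2 h2).trans (le_of_eq ?_)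
  push_cast
  simp only [card_singleton, Nat.cast_one]
  congr 1
  congr 1 <;>
  · refine sum_congr rfl fun i _ => ?_
    split_ifs <;> simp

/-- If each segment is open with probability at most `1 / (4 |ι|)`, clusters have expected size at
most two. -/
lemma bernSum_card_segCluster_le {p : ℝ} (hp0 : 0 ≤ p) (hp1 : p ≤ 1) {E : Finset α} {l : ℕ}
    (hFE : ∀ x i, F x i ⊆ E) (hFl : ∀ x i, (F x i).card = l)
    (hdisj : ∀ x i y j e, e ∈ F x i → e ∈ F y j → x = y ∧ i = j)
    (hpl : p ^ l * (4 * Fintype.card ι) ≤ 1) (Y : Finset X) (x : X) :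
    bernSum p E (fun s => ((segCluster π F Y x s).card : ℝ)) ≤ 2 := by
  induction Y using Finset.strongInduction generalizing x with
  | H Y ih =>
    by_cases hx : x ∈ Y
    · have hlt : Y.erase x ⊂ Y := erase_ssubset hx
      refine (bernSum_mono hp0 hp1 fun s _ => card_segCluster_le Y x s).trans ?_
      rw [bernSum_add, bernSum_add, bernSum_const, bernSum_sum, bernSum_sum]
      have key : ∀ z i w, (z = x ∨ π i z = x) →
          bernSum p E (fun s => (if F z i ⊆ s then 1 else 0) *
            ((segCluster π F (Y.erase x) w s).card : ℝ)) ≤ p ^ l * 2 := by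
        intro z i w hz
        rw [bernSum_subset_mul p (hFE z i), hFl]
        · exact mul_le_mul_of_nonneg_left (ih _ hlt w) (pow_nonneg hp0 _)
        · intro e he s
          have := ignores_segCluster (Y := Y.erase x) (e := e) (π := π) (F := F) ?_ w s
          · simp only [this]
          · intro a j ha hb hmem
            obtain ⟨rfl, rfl⟩ := hdisj _ _ _ _ e he hmem
            rcases hz with hz | hz
            · exact (mem_erase.1 ha).1 hz
            · exact (mem_erase.1 hb).1 hz
      have h1 := sum_le_sum fun i (_ : i ∈ univ) => key x i (π i x) (Or.inl rfl)
      have h2 := sum_le_sum fun i (_ : i ∈ univ) =>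
        key ((π i).symm x) i ((π i).symm x) (Or.inr (by simp))
      simp only [sum_const, card_univ, nsmul_eq_mul] at h1 h2
      have h3 : (Fintype.card ι : ℝ) * (p ^ l * 2) = p ^ l * (4 * Fintype.card ι) / 2 := by ring
      rw [h3] at h1 h2
      linarith
    · simp only [segCluster_of_notMem hx, card_singleton, Nat.cast_one, bernSum_const]
      norm_num

/-- With high probability all clusters have size at most `M`. -/
lemma bernProb_exists_large_segCluster_le {p : ℝ} (hp0 : 0 ≤ p) (hp1 : p ≤ 1) {E : Finset α}
    {l : ℕ} (hFE : ∀ x i, F x i ⊆ E) (hFl : ∀ x i, (F x i).card = l)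
    (hdisj : ∀ x i y j e, e ∈ F x i → e ∈ F y j → x = y ∧ i = j)
    (hpl : p ^ l * (4 * Fintype.card ι) ≤ 1) {M : ℕ} (hM : 0 < M) :
    bernProb p E (fun s => ∃ x, M < (segCluster π F univ x s).card) ≤
      2 * Fintype.card X / (M : ℝ) ^ 2 := by
  have hM' : (0 : ℝ) < M := by exact_mod_cast hM
  have h1 : bernProb p E (fun s => ∃ x, M < (segCluster π F univ x s).card) ≤
      bernProb p E (fun s => (M : ℝ) ^ 2 < ∑ x, ((segCluster π F univ x s).card : ℝ)) := by
    refine bernProb_mono hp0 hp1 fun s _ ⟨x, hx⟩ => ?_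
    have hx' : (M : ℝ) < (segCluster π F univ x s).card := by exact_mod_cast hx
    calc (M : ℝ) ^ 2 < ((segCluster π F univ x s).card : ℝ) ^ 2 := by gcongr
      _ = ∑ y ∈ segCluster π F univ x s, ((segCluster π F univ y s).card : ℝ) := by
        rw [sum_congr rfl fun y hy => by rw [segCluster_eq_of_mem hy], sum_const, nsmul_eq_mul, sq]
      _ ≤ _ := sum_le_sum_of_subset_of_nonneg (subset_univ _) fun _ _ _ => by positivity
  refine h1.trans ((bernProb_lt_le hp0 hp1 (fun s => by positivity) (by positivity)).trans ?_)
  rw [bernSum_sum]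
  gcongr
  refine (sum_le_sum fun x _ =>
    bernSum_card_segCluster_le hp0 hp1 hFE hFl hdisj hpl univ x).trans ?_
  simp [mul_comm]

end SegmentClusters

section BinaryTree

variable {α : Type*}

/-- In the binary heap with children `2 * x` and `2 * x + 1` of `x`, there is a path of `k` steps
down from `x` all of whose nodes, including `x`, are good. -/
def GoodRay (Good : ℕ → Finset α → Prop) : ℕ → ℕ → Finset α → Prop
  | 0, x, s => Good x s
  | k + 1, x, s => Good x s ∧ (GoodRay Good k (2 * x) s ∨ GoodRay Good k (2 * x + 1) s)

lemma div_two_pow_ne {n x i j : ℕ} (hx : 0 < x) (h : n / 2 ^ i = 2 * x) :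
    n / 2 ^ j ≠ 2 * x + 1 := by
  intro h'
  rcases lt_trichotomy i j with hij | rfl | hij
  · obtain ⟨k, rfl⟩ := Nat.exists_eq_add_of_lt hij
    rw [add_assoc, pow_add, ← Nat.div_div_eq_div_mul, h, pow_succ', ← Nat.div_div_eq_div_mul] at h'
    have := Nat.div_le_self (2 * x / 2) (2 ^ k)
    omega
  · omega
  · obtain ⟨k, rfl⟩ := Nat.exists_eq_add_of_lt hij
    rw [add_assoc, pow_add, ← Nat.div_div_eq_div_mul, h', pow_succ', ← Nat.div_div_eq_div_mul] at h
    have := Nat.div_le_self ((2 * x + 1) / 2) (2 ^ k)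
    omega

variable [DecidableEq α] {Good : ℕ → Finset α → Prop} {owner : α → ℕ}

lemma ignores_goodRay (hown : ∀ e y, owner e ≠ y → Ignores (Good y) e) (k x : ℕ) {e : α}
    (he : ∀ i, owner e / 2 ^ i ≠ x) : Ignores (GoodRay Good k x) e := by
  have h0 : Ignores (Good x) e := hown e x (by simpa using he 0)
  induction k generalizing x with
  | zero => exact h0
  | succ k ih =>
    have h1 : ∀ y, y / 2 = x → Ignores (GoodRay Good k y) e := fun y hy => by
      have hy' : ∀ i, owner e / 2 ^ i ≠ y := fun i hi => he (i + 1) (by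
        rw [pow_succ, ← Nat.div_div_eq_div_mul, hi, hy])
      exact ih y hy' (hown e y (by simpa using hy' 0))
    intro s
    simp only [GoodRay]
    rw [h0 s, h1 (2 * x) (by omega) s, h1 (2 * x + 1) (by omega) s]

/-- If each node is bad with probability at most `η ≤ 1 / 4`, independently, then good rays exist
with probability at least `1 - 2 η`. -/
lemma bernProb_not_goodRay_le {p η : ℝ} (hp0 : 0 ≤ p) (hp1 : p ≤ 1) (hη0 : 0 ≤ η) (hη : η ≤ 1 / 4)
    {E : Finset α} (hown : ∀ e y, owner e ≠ y → Ignores (Good y) e) {H : ℕ}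
    (hgood : ∀ y, 0 < y → y < 2 ^ H → bernProb p E (fun s => ¬ Good y s) ≤ η)
    (k x j : ℕ) (hx : 0 < x) (hxj : x < 2 ^ j) (hjk : j + k = H) :
    bernProb p E (fun s => ¬ GoodRay Good k x s) ≤ 2 * η := by
  have hgx : bernProb p E (fun s => ¬ Good x s) ≤ η :=
    hgood x hx (hxj.trans_le (Nat.pow_le_pow_right (by norm_num) (by omega)))
  induction k generalizing x j with
  | zero => exact hgx.trans (by linarith)
  | succ k ih =>
    have hchild : ∀ y, y / 2 = x → bernProb p E (fun s => ¬ GoodRay Good k y s) ≤ 2 * η := by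
      intro y hy
      have hyj : y < 2 ^ (j + 1) := by rw [pow_succ]; omega
      exact ih y (j + 1) (by omega) hyj (by omega)
        (hgood y (by omega) (hyj.trans_le (Nat.pow_le_pow_right (by norm_num) (by omega))))
    have h1 : bernProb p E (fun s => ¬ GoodRay Good (k + 1) x s) ≤
        bernProb p E (fun s => ¬ Good x s ∨
          (¬ GoodRay Good k (2 * x) s ∧ ¬ GoodRay Good k (2 * x + 1) s)) :=
      bernProb_mono hp0 hp1 fun s _ h => by simp only [GoodRay] at h; tauto
    refine h1.trans ((bernProb_or_le hp0 hp1 E _ _).trans ?_)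
    rw [bernProb_and_of_ignores]
    · have h2 := hchild (2 * x) (by omega)
      have h3 := hchild (2 * x + 1) (by omega)
      have h4 := bernProb_nonneg hp0 hp1 E (fun s => ¬ GoodRay Good k (2 * x) s)
      have h5 := mul_le_mul h2 h3 (bernProb_nonneg hp0 hp1 E _) (by linarith)
      nlinarith
    · intro e
      by_cases he : ∀ i, owner e / 2 ^ i ≠ 2 * x
      · exact Or.inl fun s => by simp only [ignores_goodRay hown k _ he s]
      · push Not at he
        obtain ⟨i, hi⟩ := he
        exact Or.inr fun s => by
          simp only [ignores_goodRay hown k _ (fun j => div_two_pow_ne hx hi) s]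

end BinaryTree

section Construction

/-- The vertices of the construction: thickened and stretched binary tree, base vertices, and
interior vertices of the subdivided edges of the base. -/
inductive Vtx (h m K N q : ℕ) : Type
  | tree (c : Fin (2 ^ h) × Fin (m + 1)) (i : Fin K) : Vtx h m K N q
  | base (z : Fin N) : Vtx h m K N q
  | seg (z : Fin N) (k : Fin 30) (j : Fin (q + 1)) : Vtx h m K N q

variable {h m K N q : ℕ}

/-- The vertices as a disjoint union. -/
def Vtx.equivSum : Vtx h m K N q ≃
    ((Fin (2 ^ h) × Fin (m + 1)) × Fin K) ⊕ (Fin N ⊕ (Fin N × Fin 30 × Fin (q + 1))) where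
  toFun
    | .tree c i => .inl (c, i)
    | .base z => .inr (.inl z)
    | .seg z k j => .inr (.inr (z, k, j))
  invFun
    | .inl (c, i) => .tree c i
    | .inr (.inl z) => .base z
    | .inr (.inr (z, k, j)) => .seg z k j
  left_inv v := by cases v <;> rfl
  right_inv v := by rcases v with _ | _ | _ <;> rfl

instance : Fintype (Vtx h m K N q) := Fintype.ofEquiv _ Vtx.equivSum.symm

instance : DecidableEq (Vtx h m K N q) := Classical.decEq _

/-- The cluster above the cluster `c`. -/
def clusterAbove (c : Fin (2 ^ h) × Fin (m + 1)) : Fin (2 ^ h) × Fin (m + 1) :=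
  if c.2.val = 0 then (⟨c.1.val / 2, (Nat.div_le_self _ _).trans_lt c.1.2⟩, Fin.last m)
  else (c.1, ⟨c.2.val - 1, (Nat.sub_le _ _).trans_lt c.2.2⟩)

/-- The cluster `c` is not the top one. -/
def NotTop (c : Fin (2 ^ h) × Fin (m + 1)) : Prop := 0 < c.1.val ∨ 0 < c.2.val

/-- The cluster `c` is at the bottom of the tree. -/
def IsBottom (c : Fin (2 ^ h) × Fin (m + 1)) : Prop := 2 ^ h ≤ 2 * c.1.val ∧ c.2 = Fin.last m

/-- The edges of the construction, oriented. -/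
inductive Link (π : Fin 30 → Equiv.Perm (Fin N)) : Vtx h m K N q → Vtx h m K N q → Prop
  | tree (c) (hc : NotTop c) (i j) : Link π (.tree (clusterAbove c) i) (.tree c j)
  | attach (c i z) (hc : IsBottom c) (hz : z.val = c.1.val * K + i.val) :
      Link π (.tree c i) (.base z)
  | start (z k) : Link π (.base z) (.seg z k 0)
  | mid (z k j j') (hj : j.val + 1 = j'.val) : Link π (.seg z k j) (.seg z k j')
  | finish (z k) : Link π (.seg z k (Fin.last q)) (.base (π k z))

/-- The distance of a cluster from the top. -/
def clusterDepth (c : Fin (2 ^ h) × Fin (m + 1)) : ℕ := (m + 1) * Nat.size c.1.val + c.2.val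

lemma size_div_two {n : ℕ} (hn : 0 < n) : Nat.size n = Nat.size (n / 2) + 1 := by
  have key : ∀ k, Nat.size n ≤ k + 1 ↔ Nat.size (n / 2) ≤ k := fun k => by
    rw [Nat.size_le, Nat.size_le, pow_succ]; omega
  have h1 := (key (Nat.size (n / 2))).2 le_rfl
  have h2 := Nat.size_pos.2 hn
  have h3 := (key (Nat.size n - 1)).1 (by omega)
  omega

lemma clusterDepth_above {c : Fin (2 ^ h) × Fin (m + 1)} (hc : NotTop c) :
    clusterDepth (clusterAbove c) + 1 = clusterDepth c := by
  obtain ⟨⟨x, hx⟩, ⟨a, ha⟩⟩ := c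
  unfold clusterDepth clusterAbove
  by_cases h0 : a = 0
  · subst h0
    have hx0 : 0 < x := by
      rcases hc with h | h
      · exact h
      · exact absurd h (lt_irrefl 0)
    simp only [if_true, Fin.val_last]
    rw [size_div_two hx0]
    ring
  · simp only [h0, if_false]
    omega

lemma clusterDepth_of_isBottom {c : Fin (2 ^ h) × Fin (m + 1)} (hc : IsBottom c) :
    clusterDepth c = (m + 1) * h + m := by
  obtain ⟨⟨x, hx⟩, a⟩ := c
  obtain ⟨h1, rfl⟩ := hc
  simp only [clusterDepth, Fin.val_last]
  simp only at h1
  have h2 : Nat.size x ≤ h := Nat.size_le.2 hx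
  have h3 : h ≤ Nat.size x := by
    rcases Nat.eq_zero_or_pos h with rfl | hpos
    · exact Nat.zero_le _
    · have h4 : h - 1 < Nat.size x := by
        rw [Nat.lt_size]
        have : 2 ^ h = 2 * 2 ^ (h - 1) := by rw [← pow_succ']; congr 1; omega
        omega
      omega
  rw [le_antisymm h2 h3]

lemma clusterAbove_ne {c : Fin (2 ^ h) × Fin (m + 1)} (hc : NotTop c) : clusterAbove c ≠ c :=
  fun h => by have := clusterDepth_above hc; rw [h] at this; omega

lemma Link.ne {π : Fin 30 → Equiv.Perm (Fin N)} {u w : Vtx h m K N q} (hl : Link π u w) :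
    u ≠ w := by
  cases hl with
  | tree c hc i j => intro h; injection h with h1; exact clusterAbove_ne hc h1
  | mid z k j j' hj => intro h; injection h with _ _ h; rw [h] at hj; omega
  | _ => intro h; cases h

/-- The graph of the construction. -/
def linkGraph (h m K q : ℕ) {N : ℕ} (π : Fin 30 → Equiv.Perm (Fin N)) :
    SimpleGraph (Vtx h m K N q) where
  Adj u w := Link π u w ∨ Link π w u
  symm := ⟨fun _ _ h => h.symm⟩
  loopless := ⟨fun _ h => (h.elim id id).ne rfl⟩

/-- The depth of a vertex. -/
def vtxDepth : Vtx h m K N q → ℕ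
  | .tree c _ => clusterDepth c
  | _ => (m + 1) * h + m

lemma Link.depth {π : Fin 30 → Equiv.Perm (Fin N)} {u w : Vtx h m K N q} (hl : Link π u w) :
    vtxDepth u ≤ vtxDepth w ∧ vtxDepth w ≤ vtxDepth u + 1 := by
  cases hl with
  | tree c hc i j => have := clusterDepth_above hc; simp only [vtxDepth]; omega
  | attach c i z hc hz => simp only [vtxDepth, clusterDepth_of_isBottom hc]; omega
  | _ => simp [vtxDepth]

/-- The points of the segment from `z` to `π k z`. -/
def segPt (π : Fin 30 → Equiv.Perm (Fin N)) (z : Fin N) (k : Fin 30) (j : ℕ) : Vtx h m K N q :=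
  if j = 0 then .base z else if hj : j - 1 < q + 1 then .seg z k ⟨j - 1, hj⟩ else .base (π k z)

lemma segPt_zero (π : Fin 30 → Equiv.Perm (Fin N)) (z : Fin N) (k : Fin 30) :
    segPt π z k 0 = (.base z : Vtx h m K N q) := rfl

lemma segPt_succ (π : Fin 30 → Equiv.Perm (Fin N)) (z : Fin N) (k : Fin 30) (j : Fin (q + 1)) :
    segPt π z k (j.val + 1) = (.seg z k j : Vtx h m K N q) := by
  simp [segPt]
  omega

lemma segPt_last (π : Fin 30 → Equiv.Perm (Fin N)) (z : Fin N) (k : Fin 30) :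
    segPt π z k (q + 2) = (.base (π k z) : Vtx h m K N q) := by
  simp [segPt]

lemma link_segPt (π : Fin 30 → Equiv.Perm (Fin N)) (z : Fin N) (k : Fin 30) (j : Fin (q + 2)) :
    Link π (segPt π z k j.val : Vtx h m K N q) (segPt π z k (j.val + 1)) := by
  obtain ⟨j, hj⟩ := j
  rcases Nat.eq_zero_or_pos j with rfl | hpos
  · have := segPt_succ (h := h) (m := m) (K := K) (q := q) π z k 0
    simp only [Fin.val_zero] at this
    rw [segPt_zero, this]
    exact .start z k
  · obtain ⟨i, rfl⟩ : ∃ i, j = i + 1 := ⟨j - 1, by omega⟩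
    have h1 := segPt_succ (h := h) (m := m) (K := K) π z k ⟨i, (by omega : i < q + 1)⟩
    simp only at h1 ⊢
    rw [h1]
    rcases Nat.lt_or_ge (i + 1) (q + 1) with hlt | hge
    · have h2 := segPt_succ (h := h) (m := m) (K := K) π z k ⟨i + 1, hlt⟩
      simp only at h2
      rw [h2]
      exact .mid z k _ _ rfl
    · obtain rfl : i = q := by omega
      rw [segPt_last]
      exact .finish z k

/-- The `j`-th edge of the segment from `z` to `π k z`. -/
def segEdge (π : Fin 30 → Equiv.Perm (Fin N)) (z : Fin N) (k : Fin 30) (j : Fin (q + 2)) :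
    Sym2 (Vtx h m K N q) :=
  s(segPt π z k j.val, segPt π z k (j.val + 1))

lemma segEdge_inj (hq : 0 < q) {π : Fin 30 → Equiv.Perm (Fin N)} {z z' : Fin N} {k k' : Fin 30}
    {j j' : Fin (q + 2)}
    (he : (segEdge π z k j : Sym2 (Vtx h m K N q)) = segEdge π z' k' j') :
    z = z' ∧ k = k' ∧ j = j' := by
  obtain ⟨j, hj⟩ := j
  obtain ⟨j', hj'⟩ := j'
  simp only [segEdge, segPt, Sym2.eq_iff] at he
  simp only [Fin.mk.injEq]
  rcases he with ⟨h1, h2⟩ | ⟨h1, h2⟩ <;> split_ifs at h1 h2 <;>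
    simp only [Vtx.seg.injEq, Vtx.base.injEq, Fin.mk.injEq] at h1 h2 <;>
    (try omega) <;> exact ⟨by simp_all, by simp_all, by omega⟩

end Construction

section Degree

variable {h m K N q : ℕ}

lemma ncard_le_card_of_injOn {α β : Type*} [Fintype β] {s : Set α} (f : α → β)
    (hf : Set.InjOn f s) : s.ncard ≤ Fintype.card β := by
  have := Set.ncard_le_ncard_of_injOn (t := Set.univ) f (fun _ _ => Set.mem_univ _) hf
    Set.finite_univ
  rwa [Set.ncard_univ, Nat.card_eq_fintype_card] at this

lemma clusterAbove_eq {c c' : Fin (2 ^ h) × Fin (m + 1)} (hc : NotTop c)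
    (ha : clusterAbove c = c') :
    (c.1 = c'.1 ∧ c.2.val = c'.2.val + 1) ∨ (c.1 ≠ c'.1 ∧ c.1.val / 2 = c'.1.val ∧ c.2.val = 0) := by
  obtain ⟨⟨x, hx⟩, ⟨a, ha'⟩⟩ := c
  subst ha
  unfold clusterAbove
  unfold NotTop at hc
  by_cases h0 : a = 0
  · right
    simp [h0] at hc ⊢
    omega
  · left
    simp [h0]
    omega

lemma linkGraph_adj_tree {π : Fin 30 → Equiv.Perm (Fin N)} {c : Fin (2 ^ h) × Fin (m + 1)}
    {i : Fin K} {u : Vtx h m K N q} (hu : (linkGraph h m K q π).Adj (.tree c i) u) :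
    (∃ c' j, u = .tree c' j ∧ (NotTop c' ∧ clusterAbove c' = c ∨ NotTop c ∧ clusterAbove c = c')) ∨
      ∃ z, u = .base z ∧ z.val = c.1.val * K + i.val := by
  rcases hu with hu | hu
  · cases hu with
    | tree c₁ hc₁ i₁ j₁ => exact .inl ⟨_, _, rfl, .inl ⟨hc₁, rfl⟩⟩
    | attach c i z hc hz => exact .inr ⟨z, rfl, hz⟩
  · cases hu with
    | tree c₁ hc₁ i₁ j₁ => exact .inl ⟨_, _, rfl, .inr ⟨hc₁, rfl⟩⟩

lemma linkGraph_adj_base {π : Fin 30 → Equiv.Perm (Fin N)} {z : Fin N} {u : Vtx h m K N q}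
    (hu : (linkGraph h m K q π).Adj (.base z) u) :
    (∃ c i, u = .tree c i ∧ c.2 = Fin.last m ∧ z.val = c.1.val * K + i.val) ∨
      (∃ k, u = .seg z k 0) ∨ ∃ z' k, u = .seg z' k (Fin.last q) ∧ π k z' = z := by
  rcases hu with hu | hu
  · cases hu with
    | start z k => exact .inr (.inl ⟨k, rfl⟩)
  · cases hu with
    | attach c i z hc hz => exact .inl ⟨c, i, rfl, hc.2, hz⟩
    | finish z' k => exact .inr (.inr ⟨z', k, rfl, rfl⟩)

lemma linkGraph_adj_seg {π : Fin 30 → Equiv.Perm (Fin N)} {z : Fin N} {k : Fin 30}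
    {j : Fin (q + 1)} {u : Vtx h m K N q} (hu : (linkGraph h m K q π).Adj (.seg z k j) u) :
    u = .base z ∧ j = 0 ∨ u = .base (π k z) ∧ j = Fin.last q ∨
      ∃ j', u = .seg z k j' ∧ (j.val + 1 = j'.val ∨ j'.val + 1 = j.val) := by
  rcases hu with hu | hu
  · cases hu with
    | mid z k j j' hj => exact .inr (.inr ⟨j', rfl, .inl hj⟩)
    | finish z k => exact .inr (.inl ⟨rfl, rfl⟩)
  · cases hu with
    | start z k => exact .inl ⟨rfl, rfl⟩
    | mid z k j' j hj => exact .inr (.inr ⟨j', rfl, .inr hj⟩)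

lemma linkGraph_ncard_neighborSet_le (π : Fin 30 → Equiv.Perm (Fin N)) (v : Vtx h m K N q) :
    ((linkGraph h m K q π).neighborSet v).ncard ≤ 8 * K + 70 := by
  cases v with
  | tree c i =>
    let f : Vtx h m K N q → Option (Bool × Bool × Bool × Fin K)
      | .tree c' j => some (decide (clusterAbove c = c' ∧ NotTop c), decide (c'.1 = c.1),
          decide (c'.1.val % 2 = 0), j)
      | _ => none
    refine (ncard_le_card_of_injOn f ?_).trans ?_
    · intro u hu w hw huw
      rcases linkGraph_adj_tree hu with ⟨c₁, j₁, rfl, h1⟩ | ⟨z, rfl, hz⟩ <;>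
        rcases linkGraph_adj_tree hw with ⟨c₂, j₂, rfl, h2⟩ | ⟨z', rfl, hz'⟩
      · simp only [f, Option.some.injEq, Prod.mk.injEq, decide_eq_decide] at huw
        obtain ⟨e1, e2, e3, rfl⟩ := huw
        congr 1
        by_cases ha : clusterAbove c = c₁ ∧ NotTop c
        · exact ha.1.symm.trans (e1.1 ha).1
        · have hb : ¬ (clusterAbove c = c₂ ∧ NotTop c) := fun hb => ha (e1.2 hb)
          replace h1 := h1.resolve_right fun h => ha h.symm
          replace h2 := h2.resolve_right fun h => hb h.symm
          have h3 := clusterAbove_eq h1.1 h1.2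
          have h4 := clusterAbove_eq h2.1 h2.2
          simp only [Fin.ext_iff, Prod.ext_iff, ne_eq] at *
          omega
      · simp [f] at huw
      · simp [f] at huw
      · congr 1
        exact Fin.ext (hz.trans hz'.symm)
    · simp; omega
  | base z =>
    let f : Vtx h m K N q → Option (Bool × Fin 30)
      | .seg z' k j => some (decide (z' = z ∧ j = 0), k)
      | _ => none
    refine (ncard_le_card_of_injOn f ?_).trans ?_
    · intro u hu w hw huw
      rcases linkGraph_adj_base hu with ⟨c₁, i₁, rfl, h1, h1'⟩ | ⟨k₁, rfl⟩ | ⟨z₁, k₁, rfl, h1⟩ <;>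
        rcases linkGraph_adj_base hw with ⟨c₂, i₂, rfl, h2, h2'⟩ | ⟨k₂, rfl⟩ | ⟨z₂, k₂, rfl, h2⟩ <;>
        simp only [f, Option.some.injEq, Prod.mk.injEq, decide_eq_decide, reduceCtorEq] at huw
      · have hmul : c₁.1.val = c₂.1.val ∧ i₁.val = i₂.val := by
          have e := h1'.symm.trans h2'
          have hK : 0 < K := i₁.pos
          have e1 := congrArg (· / K) e
          have e2 := congrArg (· % K) e
          simp only [mul_comm _ K, Nat.mul_add_div hK, Nat.mul_add_mod, Nat.mod_eq_of_lt i₁.2,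
            Nat.mod_eq_of_lt i₂.2, Nat.div_eq_of_lt i₁.2, Nat.div_eq_of_lt i₂.2, add_zero] at e1 e2
          exact ⟨e1, e2⟩
        congr 1
        · exact Prod.ext (Fin.ext hmul.1) (h1.trans h2.symm)
        · exact Fin.ext hmul.2
      · rw [huw.2]
      · obtain ⟨e1, rfl⟩ := huw
        have := e1.1 (by simp)
        rw [this.1, this.2]
      · obtain ⟨e1, rfl⟩ := huw
        have := e1.2 (by simp)
        rw [this.1, this.2]
      · obtain ⟨e1, rfl⟩ := huw
        rw [(π k₁).injective (h1.trans h2.symm)]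
    · simp
  | seg z k j =>
    let f : Vtx h m K N q → Bool × Bool
      | .seg z' k j' => (false, decide (j' < j))
      | .base z' => (true, decide (z' = z))
      | _ => (true, true)
    refine (ncard_le_card_of_injOn f ?_).trans ?_
    · intro u hu w hw huw
      rcases linkGraph_adj_seg hu with ⟨rfl, h1⟩ | ⟨rfl, h1⟩ | ⟨j₁, rfl, h1⟩ <;>
        rcases linkGraph_adj_seg hw with ⟨rfl, h2⟩ | ⟨rfl, h2⟩ | ⟨j₂, rfl, h2⟩ <;>
        simp [f, ← Fin.val_fin_lt, Fin.ext_iff] at huw ⊢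
      · exact huw.symm
      · exact huw
      · omega
    · simp

end Degree

section Expansion

lemma cutCard_compl {V : Type} [Fintype V] [DecidableEq V] (G : SimpleGraph V) (A : Finset V) :
    cutCard G Aᶜ = cutCard G A := by
  unfold cutCard
  congr 1
  ext e
  simp only [Finset.mem_filter, Finset.mem_compl, not_not, and_congr_right_iff]
  intro _
  constructor <;> rintro ⟨x, hx, y, hy, rfl⟩ <;> exact ⟨y, hy, x, hx, Sym2.eq_swap⟩

lemma card_le_cutCard {V : Type} [Fintype V] [DecidableEq V] {G : SimpleGraph V} {A : Finset V}
    {ι : Type*} (T : Finset ι) (e : ι → V × V) (hadj : ∀ k ∈ T, G.Adj (e k).1 (e k).2)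
    (hsep : ∀ k ∈ T, ¬ ((e k).1 ∈ A ↔ (e k).2 ∈ A))
    (hinj : ∀ k ∈ T, ∀ k' ∈ T, s((e k).1, (e k).2) = s((e k').1, (e k').2) → k = k') :
    T.card ≤ cutCard G A := by
  refine Finset.card_le_card_of_injOn (fun k => s((e k).1, (e k).2)) ?_
    fun k hk k' hk' => hinj k hk k' hk'
  intro k hk
  have hk : k ∈ T := hk
  simp only [edgeFinset', Finset.coe_filter, Finset.mem_filter, Finset.mem_univ, true_and,
    Set.mem_ofPred_eq, SimpleGraph.mem_edgeSet]
  refine ⟨hadj k hk, ?_⟩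
  have := hsep k hk
  by_cases h1 : (e k).1 ∈ A
  · exact ⟨_, h1, _, by tauto, rfl⟩
  · exact ⟨_, by tauto, _, h1, Sym2.eq_swap⟩

variable {h m K N q : ℕ} {π : Fin 30 → Equiv.Perm (Fin N)}

lemma card_cut_segments_le (hq : 0 < q) (A : Finset (Vtx h m K N q)) :
    (Finset.univ.filter fun x : Fin N × Fin 30 => ∃ j : Fin (q + 2),
      ¬ (segPt π x.1 x.2 j.val ∈ A ↔ segPt π x.1 x.2 (j.val + 1) ∈ A)).card ≤
      cutCard (linkGraph h m K q π) A := by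
  have hch : ∀ x : Fin N × Fin 30, ∃ j : Fin (q + 2),
      (∃ j : Fin (q + 2), ¬ (segPt π x.1 x.2 j.val ∈ A ↔ segPt π x.1 x.2 (j.val + 1) ∈ A)) →
      ¬ (segPt π x.1 x.2 j.val ∈ A ↔ segPt π x.1 x.2 (j.val + 1) ∈ A) := fun x => by
    by_cases hx : ∃ j : Fin (q + 2),
      ¬ (segPt π x.1 x.2 j.val ∈ A ↔ segPt π x.1 x.2 (j.val + 1) ∈ A)
    · exact ⟨hx.choose, fun _ => hx.choose_spec⟩
    · exact ⟨0, fun h => absurd h hx⟩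
  choose j hj using hch
  refine card_le_cutCard _ (fun x => (segPt π x.1 x.2 (j x).val, segPt π x.1 x.2 ((j x).val + 1)))
    (fun x _ => .inl (link_segPt π x.1 x.2 (j x))) (fun x hx => hj x (Finset.mem_filter.1 hx).2) ?_
  intro x _ y _ hxy
  obtain ⟨h1, h2, -⟩ := segEdge_inj hq (j := j x) (j' := j y) hxy
  exact Prod.ext h1 h2

lemma segPt_mem_iff {A : Finset (Vtx h m K N q)} {z : Fin N} {k : Fin 30}
    (hA : ¬ ∃ j : Fin (q + 2), ¬ (segPt π z k j.val ∈ A ↔ segPt π z k (j.val + 1) ∈ A))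
    {j : ℕ} (hj : j ≤ q + 2) : segPt π z k j ∈ A ↔ .base z ∈ A := by
  induction j with
  | zero => rfl
  | succ j ih =>
    rw [← ih (by omega)]
    push Not at hA
    exact (hA ⟨j, by omega⟩).symm

lemma card_cut_tree_le (A : Finset (Vtx h m K N q)) :
    (Finset.univ.filter fun x : (Fin (2 ^ h) × Fin (m + 1)) × Fin K => NotTop x.1 ∧
      ¬ (.tree (clusterAbove x.1) x.2 ∈ A ↔ .tree x.1 x.2 ∈ A)).card ≤
      cutCard (linkGraph h m K q π) A := by
  refine card_le_cutCard _ (fun x => (.tree (clusterAbove x.1) x.2, .tree x.1 x.2))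
    (fun x hx => .inl (.tree _ (Finset.mem_filter.1 hx).2.1 _ _))
    (fun x hx => (Finset.mem_filter.1 hx).2.2) ?_
  intro x hx y hy hxy
  have h1 := clusterDepth_above (Finset.mem_filter.1 hx).2.1
  have h2 := clusterDepth_above (Finset.mem_filter.1 hy).2.1
  simp only [Sym2.eq_iff, Vtx.tree.injEq] at hxy
  rcases hxy with ⟨-, h3, h4⟩ | ⟨⟨h3, -⟩, h4, -⟩
  · exact Prod.ext h3 h4
  · rw [h3] at h1
    rw [← h4] at h2
    omega

lemma card_cut_attach_le (A : Finset (Vtx h m K N q))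
    (a : Fin (2 ^ h) × Fin K → Fin N) (ha : ∀ x, (a x).val = x.1.val * K + x.2.val) :
    (Finset.univ.filter fun x : Fin (2 ^ h) × Fin K => 2 ^ h ≤ 2 * x.1.val ∧
      ¬ (.tree (x.1, Fin.last m) x.2 ∈ A ↔ .base (a x) ∈ A)).card ≤
      cutCard (linkGraph h m K q π) A := by
  refine card_le_cutCard _ (fun x => (.tree (x.1, Fin.last m) x.2, .base (a x)))
    (fun x hx => .inl (.attach _ _ _ ⟨(Finset.mem_filter.1 hx).2.1, rfl⟩ (ha x)))
    (fun x hx => (Finset.mem_filter.1 hx).2.2) ?_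
  intro x hx y hy hxy
  simp only [Sym2.eq_iff, Vtx.tree.injEq, Prod.mk.injEq, reduceCtorEq, false_and, or_false] at hxy
  exact Prod.ext hxy.1.1.1 hxy.1.2

lemma card_base_le (hq : 0 < q) (hπ : ∀ S : Finset (Fin N), 2 * S.card ≤ N →
      3 * S.card ≤ 2 * (Finset.univ.biUnion fun i => S.image (π i)).card)
    (A : Finset (Vtx h m K N q))
    (hA : 2 * (Finset.univ.filter fun z : Fin N => .base z ∈ A).card ≤ N) :
    (Finset.univ.filter fun z : Fin N => .base z ∈ A).card ≤
      2 * cutCard (linkGraph h m K q π) A := by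
  set U := Finset.univ.filter fun z : Fin N => .base z ∈ A with hU
  have hcut := card_cut_segments_le (π := π) hq A
  set B := Finset.univ.filter fun x : Fin N × Fin 30 => ∃ j : Fin (q + 2),
      ¬ (segPt π x.1 x.2 j.val ∈ A ↔ segPt π x.1 x.2 (j.val + 1) ∈ A) with hB
  have hsub : (Finset.univ.biUnion fun i => U.image (π i)) ⊆
      U ∪ B.image fun x => π x.2 x.1 := by
    intro y hy
    simp only [Finset.mem_biUnion, Finset.mem_univ, true_and, Finset.mem_image] at hy
    obtain ⟨k, z, hz, rfl⟩ := hy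
    by_cases hzk : (z, k) ∈ B
    · exact Finset.mem_union_right _ (Finset.mem_image_of_mem (fun x => π x.2 x.1) hzk)
    · have h1 := segPt_mem_iff (by simpa [hB] using hzk) (le_refl (q + 2))
      rw [segPt_last] at h1
      refine Finset.mem_union_left _ ?_
      simp only [hU, Finset.mem_filter, Finset.mem_univ, true_and] at hz ⊢
      exact h1.2 hz
  have h1 := Finset.card_le_card hsub
  have h2 := Finset.card_union_le U (B.image fun x => π x.2 x.1)
  have h3 := Finset.card_image_le (s := B) (f := fun x => π x.2 x.1)
  have h4 := hπ U hA
  omega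

lemma card_seg_le (hq : 0 < q) (A : Finset (Vtx h m K N q)) :
    (Finset.univ.filter fun x : (Fin N × Fin 30) × Fin (q + 1) => .seg x.1.1 x.1.2 x.2 ∈ A).card ≤
      (30 * (Finset.univ.filter fun z : Fin N => .base z ∈ A).card +
        cutCard (linkGraph h m K q π) A) * (q + 1) := by
  set U := Finset.univ.filter fun z : Fin N => .base z ∈ A with hU
  have hcut := card_cut_segments_le (π := π) hq A
  set B := Finset.univ.filter fun x : Fin N × Fin 30 => ∃ j : Fin (q + 2),
      ¬ (segPt π x.1 x.2 j.val ∈ A ↔ segPt π x.1 x.2 (j.val + 1) ∈ A) with hB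
  have hsub : (Finset.univ.filter fun x : (Fin N × Fin 30) × Fin (q + 1) =>
      .seg x.1.1 x.1.2 x.2 ∈ A) ⊆ (U ×ˢ Finset.univ ∪ B) ×ˢ Finset.univ := by
    rintro ⟨⟨z, k⟩, j⟩ hx
    simp only [Finset.mem_filter, Finset.mem_univ, true_and] at hx
    simp only [Finset.mem_product, Finset.mem_union, Finset.mem_univ, and_true]
    by_cases hzk : (z, k) ∈ B
    · exact .inr hzk
    · have h1 := segPt_mem_iff (by simpa [hB] using hzk) (by omega : j.val + 1 ≤ q + 2)
      rw [segPt_succ] at h1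
      exact .inl (by simpa [hU] using h1.1 hx)
  refine (Finset.card_le_card hsub).trans ?_
  rw [Finset.card_product, Finset.card_univ, Fintype.card_fin]
  refine Nat.mul_le_mul_right _ ((Finset.card_union_le _ _).trans ?_)
  rw [Finset.card_product, Finset.card_univ, Fintype.card_fin]
  omega

/-- The columns `(x, i)` whose bottom vertex lies in `A`. -/
def endSet (A : Finset (Vtx h m K N q)) : Finset (Fin (2 ^ h) × Fin K) :=
  Finset.univ.filter fun x => .tree (x.1, Fin.last m) x.2 ∈ A

/-- The columns `(x, i)` containing a cut edge. -/
def cutColumns (A : Finset (Vtx h m K N q)) : Finset (Fin (2 ^ h) × Fin K) :=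
  (Finset.univ.filter fun x : (Fin (2 ^ h) × Fin (m + 1)) × Fin K => NotTop x.1 ∧
      ¬ (.tree (clusterAbove x.1) x.2 ∈ A ↔ .tree x.1 x.2 ∈ A)).image fun x => (x.1.1, x.2)

lemma card_cutColumns_le (A : Finset (Vtx h m K N q)) :
    (cutColumns A).card ≤ cutCard (linkGraph h m K q π) A :=
  Finset.card_image_le.trans (card_cut_tree_le A)

lemma mem_iff_of_notMem_cutColumns {A : Finset (Vtx h m K N q)} {x : Fin (2 ^ h)} {i : Fin K}
    (hx : (x, i) ∉ cutColumns A) (a : Fin (m + 1)) (ha : NotTop (x, a)) :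
    (.tree (clusterAbove (x, a)) i ∈ A ↔ .tree (x, a) i ∈ A) := by
  by_contra hcon
  exact hx (Finset.mem_image.2 ⟨((x, a), i), by simpa using ⟨ha, hcon⟩, rfl⟩)

lemma mem_iff_last_of_notMem_cutColumns {A : Finset (Vtx h m K N q)} {x : Fin (2 ^ h)} {i : Fin K}
    (hx : (x, i) ∉ cutColumns A) (a : Fin (m + 1)) :
    (.tree (x, a) i ∈ A ↔ .tree (x, Fin.last m) i ∈ A) := by
  have key : ∀ b : ℕ, (hb : b < m + 1) → (.tree (x, ⟨b, hb⟩) i ∈ A ↔ .tree (x, 0) i ∈ A) := by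
    intro b
    induction b with
    | zero => intro _; rfl
    | succ b ih =>
      intro hb
      rw [← ih (by omega), ← mem_iff_of_notMem_cutColumns hx ⟨b + 1, hb⟩ (.inr (by simp))]
      simp [clusterAbove]
  rw [key a a.2, ← key m (by omega)]
  rfl

lemma card_tree_le (A : Finset (Vtx h m K N q)) :
    (Finset.univ.filter fun x : (Fin (2 ^ h) × Fin K) × Fin (m + 1) =>
      .tree (x.1.1, x.2) x.1.2 ∈ A).card ≤
      ((endSet A).card + cutCard (linkGraph h m K q π) A) * (m + 1) := by
  have hsub : (Finset.univ.filter fun x : (Fin (2 ^ h) × Fin K) × Fin (m + 1) =>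
      .tree (x.1.1, x.2) x.1.2 ∈ A) ⊆ (endSet A ∪ cutColumns A) ×ˢ Finset.univ := by
    rintro ⟨⟨x, i⟩, a⟩ hx
    simp only [Finset.mem_filter, Finset.mem_univ, true_and] at hx
    simp only [Finset.mem_product, Finset.mem_union, Finset.mem_univ, and_true]
    by_cases hc : (x, i) ∈ cutColumns A
    · exact .inr hc
    · exact .inl (by simpa [endSet] using (mem_iff_last_of_notMem_cutColumns hc a).1 hx)
  refine (Finset.card_le_card hsub).trans ?_
  rw [Finset.card_product, Finset.card_univ, Fintype.card_fin]
  refine Nat.mul_le_mul_right _ ((Finset.card_union_le _ _).trans ?_)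
  have := card_cutColumns_le (π := π) A
  omega

lemma card_endSet_le (hh : 0 < h) (hN : 2 ^ h * K ≤ N) (A : Finset (Vtx h m K N q)) :
    (endSet A).card ≤ 2 * (Finset.univ.filter fun z : Fin N => .base z ∈ A).card +
      3 * cutCard (linkGraph h m K q π) A := by
  have hcut := card_cutColumns_le (π := π) A
  have haN : ∀ x : Fin (2 ^ h) × Fin K, x.1.val * K + x.2.val < N := fun x => by
    have h1 : (x.1.val + 1) * K ≤ 2 ^ h * K := Nat.mul_le_mul_right _ x.1.2
    have h2 := x.2.2
    rw [add_mul] at h1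
    omega
  let a : Fin (2 ^ h) × Fin K → Fin N := fun x => ⟨x.1.val * K + x.2.val, haN x⟩
  have hinj : ∀ x y, a x = a y → x = y := fun x y hxy => by
    have e : x.1.val * K + x.2.val = y.1.val * K + y.2.val := congrArg Fin.val hxy
    have hK : 0 < K := x.2.pos
    have e1 := congrArg (· / K) e
    have e2 := congrArg (· % K) e
    simp only [mul_comm _ K, Nat.mul_add_div hK, Nat.mul_add_mod, Nat.mod_eq_of_lt x.2.2,
      Nat.mod_eq_of_lt y.2.2, Nat.div_eq_of_lt x.2.2, Nat.div_eq_of_lt y.2.2, add_zero] at e1 e2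
    exact Prod.ext (Fin.ext e1) (Fin.ext e2)
  have hatt := card_cut_attach_le (π := π) A a (fun _ => rfl)
  set T := Finset.univ.filter fun x : Fin (2 ^ h) × Fin K => 2 ^ h ≤ 2 * x.1.val ∧
      ¬ (.tree (x.1, Fin.last m) x.2 ∈ A ↔ .base (a x) ∈ A) with hT
  set U := Finset.univ.filter fun z : Fin N => .base z ∈ A with hU
  have hpart := Finset.card_filter_add_card_filter_not (s := endSet A)
    (fun x => 2 ^ h ≤ 2 * x.1.val)
  have hleaf : ((endSet A).filter fun x => 2 ^ h ≤ 2 * x.1.val).card ≤ U.card + T.card := by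
    have h1 : (((endSet A).filter fun x => 2 ^ h ≤ 2 * x.1.val) \ T).card ≤ U.card := by
      refine Finset.card_le_card_of_injOn a ?_ fun x _ y _ => hinj x y
      intro x hx
      simp only [Finset.coe_sdiff, Set.mem_sdiff, Finset.mem_coe, endSet, hT, hU,
        Finset.mem_filter, Finset.mem_univ, true_and] at hx ⊢
      tauto
    have h2 := Finset.le_card_sdiff T ((endSet A).filter fun x => 2 ^ h ≤ 2 * x.1.val)
    omega
  have hnode : 2 * ((endSet A).filter fun x => ¬ 2 ^ h ≤ 2 * x.1.val).card ≤
      (endSet A ∪ cutColumns A).card := by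
    have hpow : 2 ^ h = 2 * 2 ^ (h - 1) := by rw [← pow_succ']; congr 1; omega
    have h1 : (((endSet A).filter fun x => ¬ 2 ^ h ≤ 2 * x.1.val) ×ˢ
        (Finset.univ : Finset (Fin 2))).card ≤ (endSet A ∪ cutColumns A).card := by
      refine Finset.card_le_card_of_injOn
        (fun x => (Fin.ofNat (2 ^ h) (2 * x.1.1.val + x.2.val), x.1.2)) ?_ ?_
      · rintro ⟨⟨x, i⟩, b⟩ hx
        simp only [Finset.coe_product, Set.mem_prod, Finset.mem_coe, Finset.mem_filter] at hx
        have hlt : 2 * x.val + b.val < 2 ^ h := by omega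
        simp only [Finset.coe_union, Set.mem_union, Finset.mem_coe]
        by_cases hc : (Fin.ofNat (2 ^ h) (2 * x.val + b.val), i) ∈ cutColumns A
        · exact .inr hc
        · left
          have hy : (Fin.ofNat (2 ^ h) (2 * x.val + b.val)).val = 2 * x.val + b.val := by
            simp [Nat.mod_eq_of_lt hlt]
          set y := Fin.ofNat (2 ^ h) (2 * x.val + b.val)
          have hxe : .tree (x, Fin.last m) i ∈ A := by simpa [endSet] using hx.1.1
          rcases Nat.eq_zero_or_pos y.val with h0 | hpos
          · have : y = x := Fin.ext (by omega)
            rw [this]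
            exact hx.1.1
          · have h1 := mem_iff_of_notMem_cutColumns hc 0 (.inl hpos)
            have h2 : clusterAbove (y, (0 : Fin (m + 1))) = (x, Fin.last m) := by
              simp only [clusterAbove, Fin.val_zero, if_true, Prod.mk.injEq, and_true]
              exact Fin.ext (by simp only; omega)
            rw [h2, mem_iff_last_of_notMem_cutColumns hc 0] at h1
            simpa [endSet] using h1.1 hxe
      · rintro ⟨⟨x, i⟩, b⟩ hx ⟨⟨x', i'⟩, b'⟩ hx' heq
        simp only [Finset.coe_product, Set.mem_prod, Finset.mem_coe, Finset.mem_filter] at hx hx'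
        have hlt : 2 * x.val + b.val < 2 ^ h := by omega
        have hlt' : 2 * x'.val + b'.val < 2 ^ h := by omega
        simp only [Prod.mk.injEq, Fin.ext_iff, Fin.ofNat, Nat.mod_eq_of_lt hlt,
          Nat.mod_eq_of_lt hlt'] at heq ⊢
        omega
    rw [Finset.card_product, Finset.card_univ, Fintype.card_fin] at h1
    omega
  have := Finset.card_union_le (endSet A) (cutColumns A)
  omega

lemma card_le_mul_cutCard (hh : 0 < h) (hq : 0 < q) (hN : 2 ^ h * K ≤ N)
    (hπ : ∀ S : Finset (Fin N), 2 * S.card ≤ N →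
      3 * S.card ≤ 2 * (Finset.univ.biUnion fun i => S.image (π i)).card)
    (A : Finset (Vtx h m K N q))
    (hA : 2 * (Finset.univ.filter fun z : Fin N => .base z ∈ A).card ≤ N) :
    A.card ≤ (8 * (m + 1) + 61 * (q + 1) + 2) * cutCard (linkGraph h m K q π) A := by
  have h1 := card_base_le hq hπ A hA
  have h2 := card_seg_le (π := π) hq A
  have h3 := card_endSet_le (π := π) hh hN A
  have h4 := card_tree_le (π := π) A
  have hsub : A ⊆ ((Finset.univ.filter fun x : (Fin (2 ^ h) × Fin K) × Fin (m + 1) =>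
      .tree (x.1.1, x.2) x.1.2 ∈ A).image fun x => .tree (x.1.1, x.2) x.1.2) ∪
      ((Finset.univ.filter fun z : Fin N => .base z ∈ A).image .base ∪
      (Finset.univ.filter fun x : (Fin N × Fin 30) × Fin (q + 1) =>
        .seg x.1.1 x.1.2 x.2 ∈ A).image fun x => .seg x.1.1 x.1.2 x.2) := by
    intro v hv
    cases v with
    | tree c i =>
      exact Finset.mem_union_left _ (Finset.mem_image.2 ⟨((c.1, i), c.2), by simpa using hv, rfl⟩)
    | base z =>
      exact Finset.mem_union_right _ (Finset.mem_union_left _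
        (Finset.mem_image.2 ⟨z, by simpa using hv, rfl⟩))
    | seg z k j =>
      exact Finset.mem_union_right _ (Finset.mem_union_right _
        (Finset.mem_image.2 ⟨((z, k), j), by simpa using hv, rfl⟩))
  refine (Finset.card_le_card hsub).trans ((Finset.card_union_le _ _).trans
    ((add_le_add Finset.card_image_le ((Finset.card_union_le _ _).trans
      (add_le_add Finset.card_image_le Finset.card_image_le))).trans ?_))
  refine (add_le_add h4 (add_le_add h1 h2)).trans ?_
  set κ := cutCard (linkGraph h m K q π) A
  have h5 : (endSet A).card + κ ≤ 8 * κ := by omega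
  have h6 : 30 * (Finset.univ.filter fun z : Fin N => .base z ∈ A).card + κ ≤ 61 * κ := by omega
  have h7 := Nat.mul_le_mul_right (m + 1) h5
  have h8 := Nat.mul_le_mul_right (q + 1) h6
  nlinarith

lemma linkGraph_isExpander (hh : 0 < h) (hq : 0 < q) (hN : 2 ^ h * K ≤ N)
    (hπ : ∀ S : Finset (Fin N), 2 * S.card ≤ N →
      3 * S.card ≤ 2 * (Finset.univ.biUnion fun i => S.image (π i)).card) :
    IsExpander (linkGraph h m K q π) (1 / ((8 * (m + 1) + 61 * (q + 1) + 2 : ℕ) : ℝ))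
      (8 * K + 70) := by
  refine ⟨linkGraph_ncard_neighborSet_le π, fun S hS => ?_⟩
  suffices hle : S.card ≤ (8 * (m + 1) + 61 * (q + 1) + 2) * cutCard (linkGraph h m K q π) S by
    rw [one_div_mul_eq_div, div_le_iff₀ (by positivity), mul_comm]
    exact_mod_cast hle
  have hS' : S.card ≤ Sᶜ.card := by
    rw [Finset.card_compl]
    have h1 : 2 * (S.card : ℝ) ≤ Fintype.card (Vtx h m K N q) := by linarith
    have h2 : 2 * S.card ≤ Fintype.card (Vtx h m K N q) := by exact_mod_cast h1
    omega
  have hpart := Finset.card_filter_add_card_filter_not (s := (Finset.univ : Finset (Fin N)))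
    (fun z => (.base z : Vtx h m K N q) ∈ S)
  rw [Finset.card_univ, Fintype.card_fin] at hpart
  by_cases hA : 2 * (Finset.univ.filter fun z : Fin N => .base z ∈ S).card ≤ N
  · exact card_le_mul_cutCard hh hq hN hπ S hA
  · have h1 := card_le_mul_cutCard hh hq hN hπ Sᶜ (by simp only [Finset.mem_compl]; omega)
    rw [cutCard_compl] at h1
    exact hS'.trans h1

end Expansion

section Diameter

/-- There is a walk of length at most `n` from `u` to `w`. -/
def Near {V : Type*} (G : SimpleGraph V) (n : ℕ) (u w : V) : Prop := ∃ p : G.Walk u w, p.length ≤ n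

namespace Near

variable {V : Type*} {G : SimpleGraph V} {n n' : ℕ} {u v w : V}

lemma refl (u : V) : Near G n u u := ⟨.nil, Nat.zero_le _⟩

lemma of_adj (h : G.Adj u w) : Near G 1 u w := ⟨.cons h .nil, le_rfl⟩

lemma symm (h : Near G n u w) : Near G n w u := by
  obtain ⟨p, hp⟩ := h
  exact ⟨p.reverse, by simpa using hp⟩

lemma trans (h : Near G n u v) (h' : Near G n' v w) : Near G (n + n') u w := by
  obtain ⟨p, hp⟩ := h
  obtain ⟨p', hp'⟩ := h'
  exact ⟨p.append p', by rw [SimpleGraph.Walk.length_append]; omega⟩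

lemma mono (h : Near G n u w) (hn : n ≤ n') : Near G n' u w := by
  obtain ⟨p, hp⟩ := h
  exact ⟨p, hp.trans hn⟩

lemma of_adj_chain {f : ℕ → V} (hf : ∀ j < n, G.Adj (f j) (f (j + 1))) : Near G n (f 0) (f n) := by
  induction n with
  | zero => exact refl _
  | succ n ih => exact (ih fun j hj => hf j (by omega)).trans (of_adj (hf n (by omega)))

lemma map {W : Type*} {G' : SimpleGraph W} (φ : G →g G') (h : Near G n u w) :
    Near G' n (φ u) (φ w) := by
  obtain ⟨p, hp⟩ := h
  exact ⟨p.map φ, by simpa using hp⟩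

end Near

lemma diam_le_of_near {V : Type*} {G : SimpleGraph V} {n : ℕ} (h : ∀ u w, Near G n u w) :
    G.diam ≤ n := by
  have h1 : G.ediam ≤ n := SimpleGraph.ediam_le_of_edist_le fun u w => by
    obtain ⟨p, hp⟩ := h u w
    exact (SimpleGraph.Walk.edist_le p).trans (by exact_mod_cast hp)
  exact ENat.toNat_le_of_le_natCast h1

lemma le_add_diam_induce_supp {V : Type*} [Finite V] {H : SimpleGraph V} {f : V → ℕ}
    (hf : ∀ a b, H.Adj a b → f b ≤ f a + 1) {v w : V} (hvw : H.Reachable v w) :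
    f w ≤ f v + (H.induce (H.connectedComponentMk v).supp).diam := by
  have hconn : (H.induce (H.connectedComponentMk v).supp).Connected :=
    SimpleGraph.ConnectedComponent.connected_toSimpleGraph _
  have hv : v ∈ (H.connectedComponentMk v).supp := rfl
  have hw : w ∈ (H.connectedComponentMk v).supp := SimpleGraph.ConnectedComponent.sound hvw.symm
  have hne := hconn.nonempty
  have hdist := SimpleGraph.dist_le_diam (u := (⟨v, hv⟩ : (H.connectedComponentMk v).supp))
    (v := ⟨w, hw⟩) (SimpleGraph.connected_iff_ediam_ne_top.1 hconn)
  obtain ⟨p, hp⟩ := hconn.exists_walk_length_eq_dist ⟨v, hv⟩ ⟨w, hw⟩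
  have key : ∀ {a b} (p : (H.induce (H.connectedComponentMk v).supp).Walk a b),
      f b ≤ f a + p.length := by
    intro a b p
    induction p with
    | nil => simp
    | cons hadj p ih =>
      have := hf _ _ (SimpleGraph.induce_adj.1 hadj)
      rw [SimpleGraph.Walk.length_cons]
      omega
  have := key p
  simp only at this
  omega

/-- The set of vertices reached from `z` in at most `r` permutation steps. -/
def permBall {N : ℕ} (π : Fin 30 → Equiv.Perm (Fin N)) (z : Fin N) : ℕ → Finset (Fin N)
  | 0 => {z}
  | r + 1 => permBall π z r ∪ Finset.univ.biUnion fun i => (permBall π z r).image (π i)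

lemma lt_two_mul_card_permBall {N : ℕ} {π : Fin 30 → Equiv.Perm (Fin N)}
    (hπ : ∀ S : Finset (Fin N), 2 * S.card ≤ N →
      3 * S.card ≤ 2 * (Finset.univ.biUnion fun i => S.image (π i)).card) (z : Fin N) (r : ℕ) :
    N < 2 * (permBall π z r).card ∨ 3 ^ r ≤ 2 ^ r * (permBall π z r).card := by
  induction r with
  | zero => right; simp [permBall]
  | succ r ih =>
    have h1 : (permBall π z r).card ≤ (permBall π z (r + 1)).card :=
      Finset.card_le_card Finset.subset_union_left
    have h2 : (Finset.univ.biUnion fun i => (permBall π z r).image (π i)).card ≤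
      (permBall π z (r + 1)).card := Finset.card_le_card Finset.subset_union_right
    by_cases hN : N < 2 * (permBall π z r).card
    · left; omega
    · right
      have h3 := ih.resolve_left hN
      have h4 := hπ (permBall π z r) (by omega)
      calc 3 ^ (r + 1) = 3 * 3 ^ r := by ring
        _ ≤ 3 * (2 ^ r * (permBall π z r).card) := Nat.mul_le_mul_left _ h3
        _ = 2 ^ r * (3 * (permBall π z r).card) := by ring
        _ ≤ 2 ^ r * (2 * (permBall π z (r + 1)).card) := Nat.mul_le_mul_left _ (by omega)
        _ = 2 ^ (r + 1) * (permBall π z (r + 1)).card := by ring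

variable {h m K N q : ℕ} {π : Fin 30 → Equiv.Perm (Fin N)}

lemma Link.near {u w : Vtx h m K N q} (hl : Link π u w) : Near (linkGraph h m K q π) 1 u w :=
  Near.of_adj (Or.inl hl)

lemma near_segPt (z : Fin N) (k : Fin 30) {j : ℕ} (hj : j ≤ q + 2) :
    Near (linkGraph h m K q π) j (.base z) (segPt π z k j) :=
  Near.of_adj_chain (f := segPt π z k) fun i hi => .inl (link_segPt π z k ⟨i, by omega⟩)

lemma near_of_mem_permBall {z y : Fin N} {r : ℕ} (hy : y ∈ permBall π z r) :
    Near (linkGraph h m K q π) (r * (q + 2)) (.base z) (.base y) := by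
  induction r generalizing y with
  | zero =>
    obtain rfl : y = z := by simpa [permBall] using hy
    exact Near.refl _
  | succ r ih =>
    simp only [permBall, Finset.mem_union, Finset.mem_biUnion, Finset.mem_univ, true_and,
      Finset.mem_image] at hy
    rcases hy with hy | ⟨k, y', hy', rfl⟩
    · exact (ih hy).mono (Nat.mul_le_mul_right _ (Nat.le_succ r))
    · have h1 := near_segPt (h := h) (m := m) (K := K) (π := π) y' k (le_refl (q + 2))
      rw [segPt_last] at h1
      exact ((ih hy').trans h1).mono (by rw [add_mul, one_mul])

lemma near_base_base (hπ : ∀ S : Finset (Fin N), 2 * S.card ≤ N →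
      3 * S.card ≤ 2 * (Finset.univ.biUnion fun i => S.image (π i)).card) {r : ℕ}
    (hr : N * 2 ^ r < 2 * 3 ^ r) (z z' : Fin N) :
    Near (linkGraph h m K q π) (2 * r * (q + 2)) (.base z) (.base z') := by
  have hbig : ∀ z, N < 2 * (permBall π z r).card := fun z => by
    refine (lt_two_mul_card_permBall hπ z r).elim id fun h1 => ?_
    have h2 : N * 2 ^ r < (2 * (permBall π z r).card) * 2 ^ r := by linarith
    exact lt_of_mul_lt_mul_right h2 (Nat.zero_le _)
  obtain ⟨y, hy⟩ : (permBall π z r ∩ permBall π z' r).Nonempty := by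
    rw [← Finset.card_pos]
    have h1 := Finset.card_union_add_card_inter (permBall π z r) (permBall π z' r)
    have h2 := Finset.card_le_univ (permBall π z r ∪ permBall π z' r)
    rw [Fintype.card_fin] at h2
    have h3 := hbig z
    have h4 := hbig z'
    omega
  rw [Finset.mem_inter] at hy
  exact ((near_of_mem_permBall hy.1).trans (near_of_mem_permBall hy.2).symm).mono
    (le_of_eq (by ring))

/-- The top cluster. -/
def topCluster : Fin (2 ^ h) × Fin (m + 1) := (⟨0, Nat.two_pow_pos h⟩, 0)

lemma eq_topCluster {c : Fin (2 ^ h) × Fin (m + 1)} (hc : ¬ NotTop c) : c = topCluster := by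
  simp only [NotTop, not_or, not_lt, Nat.le_zero] at hc
  exact Prod.ext (Fin.ext hc.1) (Fin.ext hc.2)

lemma near_topCluster (c : Fin (2 ^ h) × Fin (m + 1)) (i : Fin K) :
    Near (linkGraph h m K q π) (clusterDepth c) (.tree c i) (.tree topCluster i) := by
  generalize hn : clusterDepth c = n
  induction n generalizing c with
  | zero =>
    by_cases hc : NotTop c
    · have := clusterDepth_above hc; omega
    · rw [eq_topCluster hc]; exact Near.refl _
  | succ n ih =>
    by_cases hc : NotTop c
    · have h1 := ih (clusterAbove c) (by have := clusterDepth_above hc; omega)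
      exact ((Link.tree c hc i i).near.symm.trans h1).mono (by omega)
    · rw [eq_topCluster hc]; exact Near.refl _

lemma near_top_top (hm : 0 < m) (i j : Fin K) :
    Near (linkGraph h m K q π) 2 (.tree topCluster i) (.tree topCluster j) := by
  let c : Fin (2 ^ h) × Fin (m + 1) := (⟨0, Nat.two_pow_pos h⟩, ⟨1, by omega⟩)
  have hc : NotTop c := .inr Nat.one_pos
  have hct : clusterAbove c = topCluster := rfl
  have h1 := fun l : Fin K => (Link.tree (q := q) (π := π) c hc l i).near
  rw [hct] at h1
  exact (h1 i).trans (h1 j).symm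

lemma clusterDepth_le (c : Fin (2 ^ h) × Fin (m + 1)) : clusterDepth c ≤ (m + 1) * h + m := by
  have h1 : Nat.size c.1.val ≤ h := Nat.size_le.2 c.1.2
  have h2 := Nat.mul_le_mul_left (m + 1) h1
  have h3 := c.2.2
  unfold clusterDepth
  omega

lemma vtxDepth_le (v : Vtx h m K N q) : vtxDepth v ≤ (m + 1) * h + m := by
  cases v with
  | tree c i => exact clusterDepth_le c
  | _ => exact le_rfl

lemma exists_clusterAbove_eq (hh : 0 < h) {c : Fin (2 ^ h) × Fin (m + 1)} (hc : ¬ IsBottom c) :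
    ∃ c', NotTop c' ∧ clusterAbove c' = c := by
  obtain ⟨⟨x, hx⟩, ⟨a, ha⟩⟩ := c
  by_cases hm : a = m
  · subst hm
    have hpow : 2 ^ h = 2 * 2 ^ (h - 1) := by rw [← pow_succ']; congr 1; omega
    have hlt : 2 * x + 1 < 2 ^ h := by
      by_contra hcon
      exact hc ⟨by simp only; omega, rfl⟩
    refine ⟨(⟨2 * x + 1, hlt⟩, 0), .inl (Nat.succ_pos _), ?_⟩
    simp only [clusterAbove, Fin.val_zero, if_true]
    exact Prod.ext (Fin.ext (by simp only; omega)) rfl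
  · refine ⟨(⟨x, hx⟩, ⟨a + 1, by omega⟩), .inr (Nat.succ_pos _), ?_⟩
    simp [clusterAbove]

lemma near_base_of_tree (hh : 0 < h) (hN : 2 ^ h * K ≤ N) (c : Fin (2 ^ h) × Fin (m + 1))
    (i : Fin K) : ∃ z, Near (linkGraph h m K q π) ((m + 1) * h + m - clusterDepth c + 1)
      (.tree c i) (.base z) := by
  generalize hn : (m + 1) * h + m - clusterDepth c = n
  induction n generalizing c with
  | zero =>
    have hbot : IsBottom c := by
      by_contra hc
      obtain ⟨c', h1, rfl⟩ := exists_clusterAbove_eq hh hc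
      have h2 := clusterDepth_above h1
      have h3 := clusterDepth_le c'
      omega
    have hlt : c.1.val * K + i.val < N := by
      have h1 : (c.1.val + 1) * K ≤ 2 ^ h * K := Nat.mul_le_mul_right _ c.1.2
      have h2 := i.2
      rw [add_mul] at h1
      omega
    exact ⟨⟨_, hlt⟩, Link.near (.attach c i _ hbot rfl)⟩
  | succ n ih =>
    have hbot : ¬ IsBottom c := fun hc => by rw [clusterDepth_of_isBottom hc] at hn; omega
    obtain ⟨c', h1, rfl⟩ := exists_clusterAbove_eq hh hbot
    have h2 := clusterDepth_above h1
    obtain ⟨z, hz⟩ := ih c' (by omega)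
    exact ⟨z, ((Link.tree c' h1 i i).near.trans hz).mono (by omega)⟩

lemma exists_near_base (hh : 0 < h) (hN : 2 ^ h * K ≤ N) (v : Vtx h m K N q) :
    ∃ z, Near (linkGraph h m K q π) ((m + 1) * h + m - vtxDepth v + (q + 1)) v (.base z) := by
  cases v with
  | tree c i =>
    obtain ⟨z, hz⟩ := near_base_of_tree hh hN c i
    exact ⟨z, hz.mono (by simp only [vtxDepth]; omega)⟩
  | base z => exact ⟨z, Near.refl _⟩
  | seg z k j =>
    have h1 := near_segPt (h := h) (m := m) (K := K) (π := π) z k (by omega : j.val + 1 ≤ q + 2)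
    rw [segPt_succ] at h1
    exact ⟨z, h1.symm.mono (by omega)⟩

lemma near_linkGraph (hh : 0 < h) (hm : 0 < m) (hN : 2 ^ h * K ≤ N)
    (hπ : ∀ S : Finset (Fin N), 2 * S.card ≤ N →
      3 * S.card ≤ 2 * (Finset.univ.biUnion fun i => S.image (π i)).card) {r : ℕ}
    (hr : N * 2 ^ r < 2 * 3 ^ r) (u w : Vtx h m K N q) :
    Near (linkGraph h m K q π) ((m + 1) * h + m + 2 * r * (q + 2) + 2 * (q + 1)) u w := by
  by_cases hd : (m + 1) * h + m ≤ vtxDepth u + vtxDepth w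
  · obtain ⟨z, hz⟩ := exists_near_base (π := π) hh hN u
    obtain ⟨z', hz'⟩ := exists_near_base (π := π) hh hN w
    have h1 := vtxDepth_le u
    have h2 := vtxDepth_le w
    exact ((hz.trans (near_base_base hπ hr z z')).trans hz'.symm).mono (by omega)
  · cases u with
    | tree c i =>
      cases w with
      | tree c' i' =>
        simp only [vtxDepth] at hd
        exact (((near_topCluster c i).trans (near_top_top hm i i')).trans
          (near_topCluster c' i').symm).mono (by omega)
      | _ => simp only [vtxDepth] at hd; omega
    | _ => simp only [vtxDepth] at hd; omega

end Diameter

section LongComponent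

variable {h m K N q : ℕ} {π : Fin 30 → Equiv.Perm (Fin N)}

/-- All edges leading up from the node `y` of the tree are well represented in `s`: each vertex of
the cluster above a cluster of `y` is joined to that cluster. -/
def GoodNode (h m K N q : ℕ) (y : ℕ) (s : Finset (Sym2 (Vtx h m K N q))) : Prop :=
  ∀ c : Fin (2 ^ h) × Fin (m + 1), c.1.val = y → ∀ i : Fin K, ∃ j : Fin K,
    s(.tree (clusterAbove c) i, .tree c j) ∈ s

/-- The node of the tree to which a vertex belongs. -/
def treeNode : Vtx h m K N q → ℕ
  | .tree c _ => c.1.val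
  | _ => 0

/-- The lower node of an edge. -/
def edgeNode : Sym2 (Vtx h m K N q) → ℕ :=
  Sym2.lift ⟨fun u w => max (treeNode u) (treeNode w), fun _ _ => max_comm _ _⟩

lemma ignores_goodNode (e : Sym2 (Vtx h m K N q)) (y : ℕ) (he : edgeNode e ≠ y) :
    Ignores (GoodNode h m K N q y) e := by
  intro s
  have key : ∀ c : Fin (2 ^ h) × Fin (m + 1), c.1.val = y → ∀ i j : Fin K,
      (s(.tree (clusterAbove c) i, .tree c j) ∈ insert e s ↔
        s(.tree (clusterAbove c) i, .tree c j) ∈ s) := by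
    intro c hc i j
    rw [Finset.mem_insert, or_iff_right]
    rintro rfl
    apply he
    have hle : (clusterAbove c).1.val ≤ c.1.val := by
      unfold clusterAbove
      split_ifs
      · exact Nat.div_le_self _ _
      · exact le_rfl
    exact (max_eq_right hle).trans hc
  refine propext (forall_congr' fun c => forall_congr' fun hc => forall_congr' fun i =>
    exists_congr fun j => key c hc i j)

lemma bernProb_not_goodNode_le {p : ℝ} (hp0 : 0 ≤ p) (hp1 : p ≤ 1) {y : ℕ} (hy : 0 < y)
    (hyh : y < 2 ^ h) :
    bernProb p (edgeFinset' (linkGraph h m K q π)) (fun s => ¬ GoodNode h m K N q y s) ≤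
      ((m + 1) * K : ℕ) * (1 - p) ^ K := by
  let F : Fin (m + 1) × Fin K → Finset (Sym2 (Vtx h m K N q)) := fun x =>
    Finset.univ.image fun j : Fin K => s(.tree (clusterAbove (⟨y, hyh⟩, x.1)) x.2,
      .tree (⟨y, hyh⟩, x.1) j)
  have hFE : ∀ x, F x ⊆ edgeFinset' (linkGraph h m K q π) := by
    intro x e he
    obtain ⟨j, -, rfl⟩ := Finset.mem_image.1 he
    simp only [edgeFinset', Finset.mem_filter, Finset.mem_univ, true_and, SimpleGraph.mem_edgeSet]
    exact Or.inl (.tree _ (.inl hy) _ _)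
  have hFc : ∀ x, (F x).card = K := by
    intro x
    rw [Finset.card_image_of_injective, Finset.card_univ, Fintype.card_fin]
    intro j j' hj
    simp only [Sym2.eq_iff, Vtx.tree.injEq, true_and] at hj
    rcases hj with h1 | ⟨⟨h1, -⟩, -, -⟩
    · exact h1
    · exact absurd h1 (clusterAbove_ne (.inl hy))
  calc bernProb p (edgeFinset' (linkGraph h m K q π)) (fun s => ¬ GoodNode h m K N q y s)
      ≤ bernProb p (edgeFinset' (linkGraph h m K q π))
          (fun s => ∃ x ∈ Finset.univ, ∀ e ∈ F x, e ∉ s) := by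
        refine bernProb_mono hp0 hp1 fun s _ hs => ?_
        simp only [GoodNode, not_forall, not_exists] at hs
        obtain ⟨⟨x, a⟩, hc, i, hi⟩ := hs
        obtain rfl : x = ⟨y, hyh⟩ := Fin.ext hc
        refine ⟨(a, i), Finset.mem_univ _, fun e he => ?_⟩
        obtain ⟨j, -, rfl⟩ := Finset.mem_image.1 he
        exact hi j
    _ ≤ ∑ x, bernProb p (edgeFinset' (linkGraph h m K q π)) (fun s => ∀ e ∈ F x, e ∉ s) :=
        bernProb_exists_le hp0 hp1 _ _ _
    _ = ∑ x : Fin (m + 1) × Fin K, (1 - p) ^ K := by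
        refine Finset.sum_congr rfl fun x _ => ?_
        have := bernSum_disjoint (p := p) (hFE x)
        rw [hFc] at this
        rw [← this]
        unfold bernProb
        congr!
    _ = ((m + 1) * K : ℕ) * (1 - p) ^ K := by simp

lemma reachable_of_goodNode {s : Finset (Sym2 (Vtx h m K N q))} {x : Fin (2 ^ h)} (hx : 0 < x.val)
    (hs : GoodNode h m K N q x.val s) (i : Fin K) (a : Fin (m + 1)) :
    ∃ j, (SimpleGraph.fromEdgeSet (s : Set (Sym2 (Vtx h m K N q)))).Reachable
      (.tree (clusterAbove (x, 0)) i) (.tree (x, a) j) := by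
  obtain ⟨a, ha⟩ := a
  have hstep : ∀ (a : Fin (m + 1)) (i : Fin K), ∃ j,
      (SimpleGraph.fromEdgeSet (s : Set (Sym2 (Vtx h m K N q)))).Reachable
        (.tree (clusterAbove (x, a)) i) (.tree (x, a) j) := by
    intro a i
    obtain ⟨j, hj⟩ := hs (x, a) rfl i
    refine ⟨j, SimpleGraph.Adj.reachable ?_⟩
    rw [SimpleGraph.fromEdgeSet_adj]
    refine ⟨hj, fun hcon => ?_⟩
    injection hcon with hcon
    exact clusterAbove_ne (.inl hx) hcon
  induction a with
  | zero => exact hstep 0 i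
  | succ a ih =>
    obtain ⟨j, hj⟩ := ih (by omega)
    obtain ⟨j', hj'⟩ := hstep ⟨a + 1, ha⟩ j
    have hab : clusterAbove (x, (⟨a + 1, ha⟩ : Fin (m + 1))) = (x, ⟨a, by omega⟩) := by
      simp [clusterAbove]
    rw [hab] at hj'
    exact ⟨j', hj.trans hj'⟩

lemma reachable_of_goodRay {s : Finset (Sym2 (Vtx h m K N q))} (k : ℕ) {x : Fin (2 ^ h)}
    (hx : 0 < x.val) (hxl : 2 ^ h ≤ 2 ^ (k + 1) * x.val) (hxu : (x.val + 1) * 2 ^ k ≤ 2 ^ h)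
    (hs : GoodRay (GoodNode h m K N q) k x.val s) (i : Fin K) :
    ∃ w, vtxDepth w = (m + 1) * h + m ∧
      (SimpleGraph.fromEdgeSet (s : Set (Sym2 (Vtx h m K N q)))).Reachable
        (.tree (clusterAbove (x, 0)) i) w := by
  induction k generalizing x i with
  | zero =>
    obtain ⟨j, hj⟩ := reachable_of_goodNode hx hs i (Fin.last m)
    exact ⟨.tree _ _, clusterDepth_of_isBottom (c := (x, Fin.last m)) ⟨by simpa using hxl, rfl⟩, hj⟩
  | succ k ih =>
    obtain ⟨j, hj⟩ := reachable_of_goodNode hx hs.1 i (Fin.last m)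
    have hchild : ∀ y, y / 2 = x.val → GoodRay (GoodNode h m K N q) k y s →
        ∃ w, vtxDepth w = (m + 1) * h + m ∧
        (SimpleGraph.fromEdgeSet (s : Set (Sym2 (Vtx h m K N q)))).Reachable
        (.tree (clusterAbove (x, 0)) i) w := by
      intro y hy hray
      have hyu : (y + 1) * 2 ^ k ≤ 2 ^ h := by
        refine le_trans ?_ hxu
        rw [pow_succ', ← mul_assoc]
        exact Nat.mul_le_mul_right _ (by omega)
      have hyl : 2 ^ h ≤ 2 ^ (k + 1) * y := by
        refine hxl.trans ?_
        rw [pow_succ _ (k + 1), mul_assoc]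
        exact Nat.mul_le_mul_left _ (by omega)
      have hylt : y < 2 ^ h := by
        have := Nat.le_mul_of_pos_right (y + 1) (Nat.two_pow_pos k)
        omega
      obtain ⟨w, hw, hr⟩ := ih (x := ⟨y, hylt⟩) (by simp only; omega) hyl hyu hray j
      have hab : clusterAbove ((⟨y, hylt⟩ : Fin (2 ^ h)), (0 : Fin (m + 1))) = (x, Fin.last m) := by
        simp only [clusterAbove, Fin.val_zero, if_true]
        exact Prod.ext (Fin.ext hy) rfl
      rw [hab] at hr
      exact ⟨w, hw, hj.trans hr⟩
    rcases hs.2 with h1 | h1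
    · exact hchild _ (by omega) h1
    · exact hchild _ (by omega) h1

lemma bernProb_not_reachable_le {p : ℝ} (hp0 : 0 ≤ p) (hp1 : p ≤ 1) (hh : 0 < h)
    (hη : (((m + 1) * K : ℕ) : ℝ) * (1 - p) ^ K ≤ 1 / 4) (i : Fin K) :
    bernProb p (edgeFinset' (linkGraph h m K q π)) (fun s => ¬ ∃ w, vtxDepth w = (m + 1) * h + m ∧
      (SimpleGraph.fromEdgeSet (s : Set (Sym2 (Vtx h m K N q)))).Reachable
        (.tree (⟨0, Nat.two_pow_pos h⟩, Fin.last m) i) w) ≤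
      2 * ((((m + 1) * K : ℕ) : ℝ) * (1 - p) ^ K) := by
  have h2 : 1 < 2 ^ h := Nat.one_lt_two_pow hh.ne'
  have hpow : 2 ^ h = 2 ^ (h - 1 + 1) := by congr 1; omega
  refine (bernProb_mono hp0 hp1 fun s _ hs => ?_).trans
    (bernProb_not_goodRay_le (Good := GoodNode h m K N q) (owner := edgeNode) hp0 hp1
      (mul_nonneg (Nat.cast_nonneg _) (pow_nonneg (by linarith) _)) hη ignores_goodNode
      (fun y hy hyh => bernProb_not_goodNode_le hp0 hp1 hy hyh) (h - 1) 1 1 one_pos (by norm_num)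
      (by omega))
  intro hray
  have hab : clusterAbove ((⟨1, h2⟩ : Fin (2 ^ h)), (0 : Fin (m + 1))) =
      (⟨0, Nat.two_pow_pos h⟩, Fin.last m) := by simp [clusterAbove]
  refine hs ?_
  rw [← hab]
  exact reachable_of_goodRay (h - 1) (x := ⟨1, h2⟩) one_pos (by simp only; omega)
    (by simp only; rw [hpow, pow_succ]; omega) hray i

end LongComponent

section SmallComponents

variable {h m K N q : ℕ} {π : Fin 30 → Equiv.Perm (Fin N)}

/-- The edges of the segment from `z` to `π k z`. -/
def segEdges (h m K q : ℕ) (π : Fin 30 → Equiv.Perm (Fin N)) (z : Fin N) (k : Fin 30) :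
    Finset (Sym2 (Vtx h m K N q)) :=
  Finset.univ.image (segEdge π z k)

lemma segEdges_subset (z : Fin N) (k : Fin 30) :
    segEdges h m K q π z k ⊆ edgeFinset' (linkGraph h m K q π) := by
  intro e he
  obtain ⟨j, -, rfl⟩ := Finset.mem_image.1 he
  simp only [edgeFinset', Finset.mem_filter, Finset.mem_univ, true_and, segEdge,
    SimpleGraph.mem_edgeSet]
  exact Or.inl (link_segPt π z k j)

lemma card_segEdges (hq : 0 < q) (z : Fin N) (k : Fin 30) :
    (segEdges h m K q π z k).card = q + 2 := by
  rw [segEdges, Finset.card_image_of_injective _ fun j j' hj => (segEdge_inj hq hj).2.2,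
    Finset.card_univ, Fintype.card_fin]

lemma segEdges_disjoint (hq : 0 < q) (z : Fin N) (k : Fin 30) (z' : Fin N) (k' : Fin 30)
    (e : Sym2 (Vtx h m K N q)) (he : e ∈ segEdges h m K q π z k)
    (he' : e ∈ segEdges h m K q π z' k') : z = z' ∧ k = k' := by
  obtain ⟨j, -, rfl⟩ := Finset.mem_image.1 he
  obtain ⟨j', -, hj⟩ := Finset.mem_image.1 he'
  obtain ⟨rfl, rfl, -⟩ := segEdge_inj hq hj
  exact ⟨rfl, rfl⟩

/-- A set of vertices containing the component of `u` in the percolated graph with edge set `s`,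
given a set `C` of base vertices which is a union of clusters. -/
def componentHull (π : Fin 30 → Equiv.Perm (Fin N)) (s : Finset (Sym2 (Vtx h m K N q)))
    (C : Finset (Fin N)) (u : Vtx h m K N q) : Vtx h m K N q → Prop
  | .tree _ _ => True
  | .base z => z ∈ C
  | .seg z k j => (∃ j', u = .seg z k j') ∨
      (z ∈ C ∧ ∀ i ≤ j.val, s(segPt π z k i, segPt π z k (i + 1)) ∈ s) ∨
      (π k z ∈ C ∧ ∀ i < q + 2, j.val < i → s(segPt π z k i, segPt π z k (i + 1)) ∈ s)

lemma componentHull_iff {s : Finset (Sym2 (Vtx h m K N q))} {C : Finset (Fin N)}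
    (hC : ∀ x y, SegStep π (segEdges h m K q π) Finset.univ s x y → x ∈ C → y ∈ C)
    (hCK : ∀ z : Fin N, z.val < 2 ^ h * K → z ∈ C) {u : Vtx h m K N q}
    (hu : ∀ z k j, u = .seg z k j → z ∈ C ∧ π k z ∈ C) {a b : Vtx h m K N q} (hl : Link π a b)
    (hs : s(a, b) ∈ s) : componentHull π s C u a ↔ componentHull π s C u b := by
  have hfull : ∀ z k, (∀ i < q + 2, s(segPt π z k i, segPt π z k (i + 1)) ∈ s) →
      (z ∈ C ↔ π k z ∈ C) := by
    intro z k hall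
    have hstep : SegStep π (segEdges h m K q π) Finset.univ s z (π k z) := by
      refine ⟨Finset.mem_univ _, Finset.mem_univ _, k, .inl ⟨rfl, fun e he => ?_⟩⟩
      obtain ⟨j, -, rfl⟩ := Finset.mem_image.1 he
      exact hall j.val j.2
    exact ⟨hC _ _ hstep, hC _ _ hstep.symm⟩
  cases hl with
  | tree c hc i j => exact Iff.rfl
  | attach c i z hc hz =>
    refine iff_of_true trivial (hCK z ?_)
    have h1 : (c.1.val + 1) * K ≤ 2 ^ h * K := Nat.mul_le_mul_right _ c.1.2
    have h2 := i.2
    rw [add_mul] at h1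
    omega
  | start z k =>
    rw [← segPt_succ π z k 0, ← segPt_zero π z k] at hs
    constructor
    · intro hz
      refine .inr (.inl ⟨hz, fun i hi => ?_⟩)
      obtain rfl : i = 0 := by simpa using hi
      exact hs
    · rintro (⟨j', hj'⟩ | ⟨hz, -⟩ | ⟨hz, hi⟩)
      · exact (hu z k j' hj').1
      · exact hz
      · refine (hfull z k fun i hiq => ?_).2 hz
        rcases Nat.eq_zero_or_pos i with rfl | hpos
        · exact hs
        · exact hi i hiq hpos
  | mid z k j j' hj =>
    rw [← segPt_succ π z k j, ← segPt_succ π z k j', ← hj] at hs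
    refine or_congr Iff.rfl (or_congr (and_congr_right fun _ => ?_) (and_congr_right fun _ => ?_))
    · refine ⟨fun hi i hij => ?_, fun hi i hij => hi i (by omega)⟩
      rcases Nat.lt_or_ge j.val i with hlt | hge
      · obtain rfl : i = j.val + 1 := by omega
        exact hs
      · exact hi i hge
    · refine ⟨fun hi i hiq hij => hi i hiq (by omega), fun hi i hiq hij => ?_⟩
      rcases Nat.lt_or_ge j'.val i with hlt | hge
      · exact hi i hiq hlt
      · obtain rfl : i = j.val + 1 := by omega
        exact hs
  | finish z k =>
    rw [← segPt_succ π z k (Fin.last q), ← segPt_last (q := q) π z k, Fin.val_last] at hs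
    constructor
    · rintro (⟨j', hj'⟩ | ⟨hz, hi⟩ | ⟨hz, -⟩)
      · exact (hu z k j' hj').2
      · refine (hfull z k fun i hiq => ?_).1 hz
        rcases Nat.lt_or_ge q i with hlt | hge
        · obtain rfl : i = q + 1 := by omega
          exact hs
        · exact hi i hge
      · exact hz
    · intro hz
      refine .inr (.inr ⟨hz, fun i hiq hqi => ?_⟩)
      rw [Fin.val_last] at hqi
      obtain rfl : i = q + 1 := by omega
      exact hs

lemma card_componentHull_le {s : Finset (Sym2 (Vtx h m K N q))} {C : Finset (Fin N)}
    {u : Vtx h m K N q} (hu : ∀ z k j, u = .seg z k j → z ∈ C ∧ π k z ∈ C) :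
    (Finset.univ.filter (componentHull π s C u)).card ≤
      2 ^ h * (m + 1) * K + (1 + 60 * (q + 1)) * C.card := by
  have hsub : Finset.univ.filter (componentHull π s C u) ⊆
      ((Finset.univ : Finset ((Fin (2 ^ h) × Fin (m + 1)) × Fin K)).image
        fun x => .tree x.1 x.2) ∪ (C.image .base ∪
      (((C ×ˢ (Finset.univ : Finset (Fin 30 × Fin (q + 1)))).image
        fun x => .seg x.1 x.2.1 x.2.2) ∪
      ((C ×ˢ (Finset.univ : Finset (Fin 30 × Fin (q + 1)))).image
        fun x => .seg ((π x.2.1).symm x.1) x.2.1 x.2.2))) := by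
    intro v hv
    have hv := (Finset.mem_filter.1 hv).2
    cases v with
    | tree c i =>
      exact Finset.mem_union_left _ (Finset.mem_image.2 ⟨(c, i), Finset.mem_univ _, rfl⟩)
    | base z =>
      exact Finset.mem_union_right _ (Finset.mem_union_left _ (Finset.mem_image_of_mem _ hv))
    | seg z k j =>
      refine Finset.mem_union_right _ (Finset.mem_union_right _ ?_)
      have hz : z ∈ C ∨ π k z ∈ C := by
        rcases hv with ⟨j', hj'⟩ | ⟨hz, -⟩ | ⟨hz, -⟩
        · exact .inl (hu z k j' hj').1
        · exact .inl hz
        · exact .inr hz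
      rcases hz with hz | hz
      · exact Finset.mem_union_left _ (Finset.mem_image.2
          ⟨(z, k, j), Finset.mem_product.2 ⟨hz, Finset.mem_univ _⟩, rfl⟩)
      · exact Finset.mem_union_right _ (Finset.mem_image.2
          ⟨(π k z, k, j), Finset.mem_product.2 ⟨hz, Finset.mem_univ _⟩, by simp⟩)
  refine (Finset.card_le_card hsub).trans ((Finset.card_union_le _ _).trans
    ((add_le_add Finset.card_image_le ((Finset.card_union_le _ _).trans
      (add_le_add Finset.card_image_le ((Finset.card_union_le _ _).trans
      (add_le_add Finset.card_image_le Finset.card_image_le))))).trans ?_))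
  simp only [Finset.card_product, Finset.card_univ, Fintype.card_prod, Fintype.card_fin]
  refine le_of_eq ?_
  ring

lemma exists_closed_of_small_clusters {s : Finset (Sym2 (Vtx h m K N q))}
    (hs : s ⊆ edgeFinset' (linkGraph h m K q π)) {M : ℕ}
    (hM : ∀ x, (segCluster π (segEdges h m K q π) Finset.univ x s).card ≤ M)
    (u : Vtx h m K N q) :
    ∃ Z : Finset (Vtx h m K N q), u ∈ Z ∧
      Z.card ≤ 2 ^ h * (m + 1) * K + (1 + 60 * (q + 1)) * ((2 ^ h * K + 2) * M) ∧
      ∀ a ∈ Z, ∀ b, (SimpleGraph.fromEdgeSet (s : Set (Sym2 (Vtx h m K N q)))).Adj a b → b ∈ Z := by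
  let ends : Finset (Fin N) := match u with
    | .tree _ _ => ∅
    | .base z => {z}
    | .seg z k _ => {z, π k z}
  have hends : ends.card ≤ 2 := by
    cases u with
    | tree c i => exact Nat.zero_le _
    | base z => exact (Finset.card_singleton z).le.trans (by norm_num)
    | seg z k j => exact Finset.card_le_two
  let anchors : Finset (Fin N) := (Finset.univ.filter fun z : Fin N => z.val < 2 ^ h * K) ∪ ends
  have hanchors : anchors.card ≤ 2 ^ h * K + 2 := by
    refine (Finset.card_union_le _ _).trans (add_le_add ?_ hends)
    rw [← Finset.card_range (2 ^ h * K)]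
    exact Finset.card_le_card_of_injOn Fin.val (fun z hz => by simpa using hz)
      Fin.val_injective.injOn
  let C : Finset (Fin N) :=
    anchors.biUnion fun x => segCluster π (segEdges h m K q π) Finset.univ x s
  have hCc : C.card ≤ (2 ^ h * K + 2) * M :=
    (Finset.card_biUnion_le_card_mul _ _ M fun x _ => hM x).trans (Nat.mul_le_mul_right _ hanchors)
  have hCa : ∀ x ∈ anchors, x ∈ C := fun x hx =>
    Finset.mem_biUnion.2 ⟨x, hx, self_mem_segCluster _ _ _⟩
  have hC : ∀ x y, SegStep π (segEdges h m K q π) Finset.univ s x y → x ∈ C → y ∈ C := by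
    intro x y hxy hx
    obtain ⟨a, ha, hax⟩ := Finset.mem_biUnion.1 hx
    refine Finset.mem_biUnion.2 ⟨a, ha, ?_⟩
    simp only [segCluster, Finset.mem_filter, Finset.mem_univ, true_and] at hax ⊢
    exact hax.tail hxy
  have hCK : ∀ z : Fin N, z.val < 2 ^ h * K → z ∈ C := fun z hz =>
    hCa z (Finset.mem_union_left _ (by simpa using hz))
  have hCe : ∀ z ∈ ends, z ∈ C := fun z hz => hCa z (Finset.mem_union_right _ hz)
  have hu : ∀ z k j, u = .seg z k j → z ∈ C ∧ π k z ∈ C := by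
    rintro z k j rfl
    exact ⟨hCe _ (Finset.mem_insert_self _ _),
      hCe _ (Finset.mem_insert_of_mem (Finset.mem_singleton_self _))⟩
  refine ⟨Finset.univ.filter (componentHull π s C u), ?_, ?_, ?_⟩
  · refine Finset.mem_filter.2 ⟨Finset.mem_univ _, ?_⟩
    cases u with
    | tree c i => trivial
    | base z => exact hCe z (Finset.mem_singleton_self z)
    | seg z k j => exact .inl ⟨j, rfl⟩
  · exact (card_componentHull_le hu).trans
      (Nat.add_le_add_left (Nat.mul_le_mul_left _ hCc) _)
  · intro a ha b hab
    rw [SimpleGraph.fromEdgeSet_adj] at hab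
    have hab := hab.1
    have hmem := hs hab
    simp only [edgeFinset', Finset.mem_filter, Finset.mem_univ, true_and,
      SimpleGraph.mem_edgeSet] at hmem
    rw [Finset.mem_filter] at ha ⊢
    refine ⟨Finset.mem_univ _, ?_⟩
    rcases hmem with hl | hl
    · exact (componentHull_iff hC hCK hu hl hab).1 ha.2
    · exact (componentHull_iff hC hCK hu hl (by rw [Sym2.eq_swap]; exact hab)).2 ha.2

lemma bernProb_not_closed_le {p : ℝ} (hp0 : 0 ≤ p) (hp1 : p ≤ 1) (hq : 0 < q)
    (hpq : p ^ (q + 2) * 120 ≤ 1) {M : ℕ} (hM : 0 < M) :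
    bernProb p (edgeFinset' (linkGraph h m K q π)) (fun s => ¬ ∀ u : Vtx h m K N q,
      ∃ Z : Finset (Vtx h m K N q), u ∈ Z ∧
        Z.card ≤ 2 ^ h * (m + 1) * K + (1 + 60 * (q + 1)) * ((2 ^ h * K + 2) * M) ∧
        ∀ a ∈ Z, ∀ b, (SimpleGraph.fromEdgeSet (s : Set (Sym2 (Vtx h m K N q)))).Adj a b → b ∈ Z)
      ≤ 2 * N / M ^ 2 := by
  refine (bernProb_mono hp0 hp1 fun s hsE hs => ?_).trans
    ((bernProb_exists_large_segCluster_le (π := π) (F := segEdges h m K q π)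
      (E := edgeFinset' (linkGraph h m K q π)) (l := q + 2) (M := M) hp0 hp1 segEdges_subset
      (card_segEdges hq) (segEdges_disjoint hq) ?_ hM).trans ?_)
  · by_contra! hcon
    exact hs fun u => exists_closed_of_small_clusters hsE (fun x => by exact_mod_cast hcon x) u
  · rw [Fintype.card_fin]
    norm_num
    exact hpq
  · rw [Fintype.card_fin]

end SmallComponents

section Transport

/-- The bijection of unordered pairs induced by a bijection. -/
def sym2Congr {α β : Type*} (e : α ≃ β) : Sym2 α ≃ Sym2 β where
  toFun := Sym2.map e
  invFun := Sym2.map e.symm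
  left_inv x := by simp [Sym2.map_map]
  right_inv x := by simp [Sym2.map_map]

lemma bernSum_map {α β : Type*} [DecidableEq α] [DecidableEq β] (p : ℝ) (E : Finset α) (f : α ↪ β)
    (g : Finset β → ℝ) : bernSum p (E.map f) g = bernSum p E fun s => g (s.map f) := by
  unfold bernSum
  symm
  refine Finset.sum_bij (fun s _ => s.map f) ?_ ?_ ?_ ?_
  · intro s hs
    exact Finset.mem_powerset.2 (Finset.map_subset_map.2 (Finset.mem_powerset.1 hs))
  · intro s _ t _ hst
    exact Finset.map_injective f hst
  · intro t ht
    obtain ⟨s, hs, rfl⟩ := Finset.subset_map_iff.1 (Finset.mem_powerset.1 ht)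
    exact ⟨s, Finset.mem_powerset.2 hs, rfl⟩
  · intro s _
    simp only [Finset.card_map]

variable {V W : Type} [Fintype V] [DecidableEq V] [Fintype W] [DecidableEq W]
  {G : SimpleGraph V} {G' : SimpleGraph W}

omit [DecidableEq V] [DecidableEq W] in
lemma edgeFinset'_of_iso (φ : G ≃g G') :
    edgeFinset' G' = (edgeFinset' G).map (sym2Congr φ.toEquiv).toEmbedding := by
  ext e
  obtain ⟨e, rfl⟩ := (sym2Congr φ.toEquiv).surjective e
  rw [Finset.mem_map_equiv, Equiv.symm_apply_apply]
  induction e with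
  | _ a b =>
    simp only [edgeFinset', Finset.mem_filter, Finset.mem_univ, true_and, SimpleGraph.mem_edgeSet]
    exact φ.map_adj_iff

/-- Lower bound for a percolation probability on a graph isomorphic to `G` in terms of Bernoulli
subsets of the edge set of `G`. -/
lemma le_percProb_of_iso (φ : G ≃g G') {p ε : ℝ} (hp0 : 0 ≤ p) (hp1 : p ≤ 1)
    {Q : Finset (Sym2 V) → Prop} {P : SimpleGraph W → Prop}
    (hQ : bernProb p (edgeFinset' G) (fun s => ¬ Q s) ≤ ε)
    (h : ∀ s ⊆ edgeFinset' G, Q s → ∀ H' : SimpleGraph W,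
      (∀ a b, H'.Adj (φ a) (φ b) ↔ (SimpleGraph.fromEdgeSet (s : Set (Sym2 V))).Adj a b) → P H') :
    1 - ε ≤ percProb G' p P := by
  have h1 : percProb G' p P = bernProb p (edgeFinset' G) (fun s => P (SimpleGraph.fromEdgeSet
      (s.map (sym2Congr φ.toEquiv).toEmbedding : Set (Sym2 W)))) := by
    have h2 : percProb G' p P = bernProb p (edgeFinset' G') (fun s => P (SimpleGraph.fromEdgeSet
      (s : Set (Sym2 W)))) := rfl
    rw [h2, edgeFinset'_of_iso φ]
    unfold bernProb
    rw [bernSum_map]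
  have h3 : bernProb p (edgeFinset' G) Q ≤ percProb G' p P := by
    rw [h1]
    refine bernProb_mono hp0 hp1 fun s hs hQs => h s hs hQs _ fun a b => ?_
    rw [SimpleGraph.fromEdgeSet_adj, SimpleGraph.fromEdgeSet_adj, φ.injective.ne_iff,
      Finset.mem_coe, Finset.mem_coe]
    refine and_congr_left fun _ => ?_
    have : s(φ a, φ b) = (sym2Congr φ.toEquiv) s(a, b) := rfl
    rw [this, Finset.mem_map_equiv, Equiv.symm_apply_apply]
  have h4 := bernProb_not p (edgeFinset' G) Q
  linarith

lemma IsExpander.of_iso (φ : G ≃g G') {b : ℝ} {d : ℕ} (h : IsExpander G b d) :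
    IsExpander G' b d := by
  refine ⟨fun w => ?_, fun S hS => ?_⟩
  · obtain ⟨v, rfl⟩ := φ.surjective w
    refine le_trans (le_of_eq ?_) (h.1 v)
    exact (Nat.card_congr (φ.mapNeighborSet v)).symm
  · have hcard : (S.map φ.symm.toEquiv.toEmbedding).card = S.card := Finset.card_map _
    have h1 := h.2 (S.map φ.symm.toEquiv.toEmbedding) (by
      rw [hcard, Fintype.card_congr φ.toEquiv]; exact hS)
    rw [hcard] at h1
    refine h1.trans (Nat.cast_le.2 ?_)
    refine Finset.card_le_card_of_injOn (sym2Congr φ.toEquiv) ?_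
      (Equiv.injective _).injOn
    intro e he
    simp only [Finset.coe_filter, Set.mem_ofPred_eq] at he ⊢
    obtain ⟨he, x, hx, y, hy, rfl⟩ := he
    have hmem : ∀ x, x ∈ S.map φ.symm.toEquiv.toEmbedding ↔ φ x ∈ S := fun x => by
      rw [Finset.mem_map_equiv]; rfl
    refine ⟨?_, φ x, (hmem x).1 hx, φ y, fun hcon => hy ((hmem y).2 hcon), rfl⟩
    rw [edgeFinset'_of_iso φ, Finset.mem_map_equiv, Equiv.symm_apply_apply]
    exact he

omit [DecidableEq W] in
lemma card_compVerts_le {H : SimpleGraph W} {B : ℕ}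
    (hB : ∀ u, ∃ Z : Finset W, u ∈ Z ∧ Z.card ≤ B ∧ ∀ a ∈ Z, ∀ b, H.Adj a b → b ∈ Z)
    (c : H.ConnectedComponent) : (compVerts H c).card ≤ B := by
  induction c using SimpleGraph.ConnectedComponent.ind with
  | _ u =>
    obtain ⟨Z, hu, hZ, hcl⟩ := hB u
    refine (Finset.card_le_card fun w hw => ?_).trans hZ
    obtain ⟨p⟩ := (SimpleGraph.ConnectedComponent.exact (Finset.mem_filter.1 hw).2).symm
    clear hw
    induction p with
    | nil => exact hu
    | cons hadj _ ih => exact ih (hcl _ hu _ hadj)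

end Transport

section Assembly

variable {h m K N q : ℕ} {π : Fin 30 → Equiv.Perm (Fin N)} {n : ℕ} {G : SimpleGraph (Fin n)}

lemma card_vtx_ge : N ≤ Fintype.card (Vtx h m K N q) := by
  rw [Fintype.card_congr Vtx.equivSum, Fintype.card_sum, Fintype.card_sum, Fintype.card_fin]
  omega

lemma diam_le_of_iso (φ : linkGraph h m K q π ≃g G) (hh : 0 < h) (hm : 0 < m)
    (hN : 2 ^ h * K ≤ N) (hNh : N ≤ 16 ^ h)
    (hπ : ∀ S : Finset (Fin N), 2 * S.card ≤ N →
      3 * S.card ≤ 2 * (Finset.univ.biUnion fun i => S.image (π i)).card) :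
    G.diam ≤ (m + 1) * h + m + 2 * (8 * h) * (q + 2) + 2 * (q + 1) := by
  refine diam_le_of_near fun u w => ?_
  have hr : N * 2 ^ (8 * h) < 2 * 3 ^ (8 * h) := by
    rw [pow_mul, pow_mul]
    calc N * (2 ^ 8) ^ h ≤ 16 ^ h * (2 ^ 8) ^ h := Nat.mul_le_mul_right _ hNh
      _ = 4096 ^ h := by rw [← mul_pow]; norm_num
      _ ≤ 6561 ^ h := Nat.pow_le_pow_left (by norm_num) h
      _ < 2 * (3 ^ 8) ^ h := by
        have : 0 < 6561 ^ h := by positivity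
        norm_num
  have h1 := (near_linkGraph (m := m) (K := K) (q := q) hh hm hN hπ hr (φ.symm u) (φ.symm w)).map
    φ.toHom
  have h2 : ∀ x, φ.toHom (φ.symm x) = x := φ.apply_symm_apply
  rwa [h2, h2] at h1

lemma le_diam_percProb (φ : linkGraph h m K q π ≃g G) {p ε : ℝ} (hp0 : 0 ≤ p) (hp1 : p ≤ 1)
    (hh : 0 < h) (hK : (((m + 1) * K : ℕ) : ℝ) * (1 - p) ^ K ≤ ε / 2) (hε : ε ≤ 1 / 2)
    (i : Fin K) {D : ℝ} (hD : D ≤ ((m + 1) * h : ℕ)) :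
    1 - ε ≤ percProb G p (fun H => D ≤ ((H.induce (H.connectedComponentMk
      (φ (.tree (⟨0, Nat.two_pow_pos h⟩, Fin.last m) i))).supp).diam : ℝ)) := by
  refine le_percProb_of_iso φ hp0 hp1
    ((bernProb_not_reachable_le hp0 hp1 hh (by linarith) i).trans (by linarith)) ?_
  rintro s hs ⟨w, hw, hreach⟩ H' hH'
  refine hD.trans (Nat.cast_le.2 ?_)
  let ψ : SimpleGraph.fromEdgeSet (s : Set (Sym2 (Vtx h m K N q))) →g H' :=
    ⟨φ, fun {a b} hab => (hH' a b).2 hab⟩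
  have hr : H'.Reachable (φ (.tree (⟨0, Nat.two_pow_pos h⟩, Fin.last m) i)) (φ w) := hreach.map ψ
  have hlip : ∀ a b, H'.Adj a b → vtxDepth (φ.symm b) ≤ vtxDepth (φ.symm a) + 1 := by
    intro a b hab
    have h1 := (hH' (φ.symm a) (φ.symm b)).1
      (by rwa [φ.apply_symm_apply, φ.apply_symm_apply])
    rw [SimpleGraph.fromEdgeSet_adj] at h1
    have h2 := (Finset.mem_filter.1 (hs h1.1)).2
    rcases h2 with h2 | h2
    · exact h2.depth.2
    · exact h2.depth.1.trans (Nat.le_succ _)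
  have h3 := le_add_diam_induce_supp (f := fun a => vtxDepth (φ.symm a)) hlip hr
  simp only [φ.symm_apply_apply, hw] at h3
  simp only [vtxDepth, clusterDepth, Nat.size_zero, Fin.val_last] at h3
  omega

lemma le_card_compVerts_percProb (φ : linkGraph h m K q π ≃g G) {p ε : ℝ} (hp0 : 0 ≤ p)
    (hp1 : p ≤ 1) (hq : 0 < q) (hpq : p ^ (q + 2) * 120 ≤ 1) {M : ℕ} (hM : 0 < M)
    (hMN : 2 * (N : ℝ) / (M : ℝ) ^ 2 ≤ ε) {B : ℝ}
    (hB : ((2 ^ h * (m + 1) * K + (1 + 60 * (q + 1)) * ((2 ^ h * K + 2) * M) : ℕ) : ℝ) ≤ B) :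
    1 - ε ≤ percProb G p (fun H => ∀ c : H.ConnectedComponent,
      ((compVerts H c).card : ℝ) ≤ B) := by
  refine le_percProb_of_iso φ hp0 hp1 ((bernProb_not_closed_le hp0 hp1 hq hpq hM).trans hMN) ?_
  intro s hs hZ H' hH' c
  refine le_trans (Nat.cast_le.2 (card_compVerts_le (fun u => ?_) c)) hB
  obtain ⟨Z, hu, hcard, hcl⟩ := hZ (φ.symm u)
  have hmem : ∀ x, x ∈ Z.map φ.toEquiv.toEmbedding ↔ φ.symm x ∈ Z := fun x => by
    rw [Finset.mem_map_equiv]; rfl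
  refine ⟨Z.map φ.toEquiv.toEmbedding, (hmem u).2 hu, (Finset.card_map _).trans_le hcard,
    fun a ha b hab => (hmem b).2 (hcl _ ((hmem a).1 ha) _ ?_)⟩
  exact (hH' (φ.symm a) (φ.symm b)).1 (by rwa [φ.apply_symm_apply, φ.apply_symm_apply])

lemma card_bound_le {c : ℕ} :
    2 ^ h * (m + 1) * K + (1 + 60 * (q + 1)) * ((2 ^ h * K + 2) * (c * 4 ^ h)) ≤
      ((m + 1) * K + (1 + 60 * (q + 1)) * ((K + 2) * c)) * 8 ^ h := by
  have h1 : 2 ^ h ≤ 8 ^ h := Nat.pow_le_pow_left (by norm_num) h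
  have h2 : (8 : ℕ) ^ h = 2 ^ h * 4 ^ h := by rw [← mul_pow]; norm_num
  have h3 : 2 ^ h * K + 2 ≤ 2 ^ h * (K + 2) := by have := Nat.two_pow_pos h; nlinarith
  calc 2 ^ h * (m + 1) * K + (1 + 60 * (q + 1)) * ((2 ^ h * K + 2) * (c * 4 ^ h))
      ≤ 8 ^ h * (m + 1) * K + (1 + 60 * (q + 1)) * (2 ^ h * (K + 2) * (c * 4 ^ h)) := by gcongr
    _ = _ := by rw [h2]; ring

lemma mul_pow_le_rpow {a n : ℕ} (ha : a ^ 8 ≤ 16 ^ h) (hn : 16 ^ h ≤ n) :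
    ((a * 8 ^ h : ℕ) : ℝ) ≤ (n : ℝ) ^ ((1 : ℝ) - 1 / 8) := by
  have h1 : (a * 8 ^ h) ^ 8 ≤ n ^ 7 := by
    calc (a * 8 ^ h) ^ 8 = a ^ 8 * (8 ^ h) ^ 8 := mul_pow _ _ _
      _ ≤ 16 ^ h * (8 ^ h) ^ 8 := Nat.mul_le_mul_right _ ha
      _ = (16 ^ h) ^ 7 := by
        rw [← pow_mul, ← pow_mul, mul_comm h 8, mul_comm h 7, pow_mul, pow_mul, ← mul_pow]
        norm_num
      _ ≤ n ^ 7 := Nat.pow_le_pow_left hn 7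
  have h2 : ((n : ℝ) ^ ((1 : ℝ) - 1 / 8)) ^ 8 = (n : ℝ) ^ 7 := by
    rw [← Real.rpow_natCast, ← Real.rpow_mul (Nat.cast_nonneg n), ← Real.rpow_natCast]
    norm_num
  refine le_of_pow_le_pow_left₀ (n := 8) (by norm_num) (by positivity) ?_
  rw [h2]
  exact_mod_cast h1

end Assembly

theorem component_diameter_without_giant (ε p : ℝ) (hε : 0 < ε)
    (hp0 : 0 < p) (hp1 : p < 1) :
    ∃ b > (0:ℝ), ∃ d : ℕ, 0 < d ∧ ∃ δ > (0:ℝ), ∀ n₀ : ℕ, ∃ n ≥ n₀,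
      ∃ (G : SimpleGraph (Fin n)) (v : Fin n), IsExpander G b d ∧
        1 - ε ≤ percProb G p (fun H =>
          (1 - ε) * (G.diam : ℝ) ≤
            ((H.induce (H.connectedComponentMk v).supp).diam : ℝ)) ∧
        1 - ε ≤ percProb G p (fun H =>
          ∀ comp : H.ConnectedComponent,
            ((compVerts H comp).card : ℝ) ≤ (n : ℝ) ^ ((1 : ℝ) - δ)) := by
  obtain ⟨ε₀, hε0, hε₁, hε2⟩ : ∃ ε₀ : ℝ, 0 < ε₀ ∧ ε₀ ≤ ε ∧ ε₀ ≤ 1 / 2 :=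
    ⟨min ε (1 / 2), by positivity, min_le_left _ _, min_le_right _ _⟩
  obtain ⟨q, hq, hpq⟩ : ∃ q : ℕ, 0 < q ∧ p ^ (q + 2) * 120 ≤ 1 := by
    obtain ⟨k, hk⟩ := exists_pow_lt_of_lt_one (show (0 : ℝ) < 1 / 120 by norm_num) hp1
    refine ⟨k + 1, Nat.succ_pos k, ?_⟩
    have : p ^ (k + 1 + 2) ≤ p ^ k := pow_le_pow_of_le_one hp0.le hp1.le (by omega)
    linarith
  obtain ⟨m, hm, hmε⟩ : ∃ m : ℕ, 0 < m ∧ (16 * (q + 2) + 1 : ℝ) ≤ ε₀ * (m + 1) := by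
    obtain ⟨m, hm⟩ := exists_nat_ge ((16 * (q + 2) + 1 : ℝ) / ε₀)
    refine ⟨m + 1, Nat.succ_pos m, ?_⟩
    rw [div_le_iff₀ hε0] at hm
    push_cast
    nlinarith
  obtain ⟨K, hK, hKε⟩ : ∃ K : ℕ, 0 < K ∧ (((m + 1) * K : ℕ) : ℝ) * (1 - p) ^ K ≤ ε₀ / 2 := by
    have h1 := (tendsto_self_mul_const_pow_of_lt_one (sub_nonneg.2 hp1.le)
      (sub_lt_self 1 hp0)).eventually (gt_mem_nhds (show (0 : ℝ) < ε₀ / 2 / (m + 1) by positivity))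
    obtain ⟨K, hK0, hK⟩ := ((Filter.eventually_gt_atTop 0).and h1).exists
    refine ⟨K, hK0, ?_⟩
    rw [lt_div_iff₀ (by positivity)] at hK
    push_cast
    linarith
  obtain ⟨c, hc, hcε⟩ : ∃ c : ℕ, 0 < c ∧ 2 / (c : ℝ) ^ 2 ≤ ε₀ := by
    obtain ⟨c, hc⟩ := exists_nat_ge (2 / ε₀)
    refine ⟨c + 1, Nat.succ_pos c, ?_⟩
    rw [div_le_iff₀ hε0] at hc
    rw [div_le_iff₀ (by positivity)]
    push_cast
    have : (0 : ℝ) ≤ c := Nat.cast_nonneg c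
    nlinarith [mul_nonneg hε0.le this, mul_nonneg (mul_nonneg hε0.le this) this]
  refine ⟨1 / ((8 * (m + 1) + 61 * (q + 1) + 2 : ℕ) : ℝ), by positivity, 8 * K + 70, by omega,
    1 / 8, by norm_num, fun n₀ => ?_⟩
  set a : ℕ := (m + 1) * K + (1 + 60 * (q + 1)) * ((K + 2) * c) with ha
  obtain ⟨h, hh, hn₀, hmq, hKh, hah⟩ : ∃ h : ℕ, 0 < h ∧ n₀ ≤ h ∧ m + 2 * (q + 1) ≤ h ∧ K ≤ h ∧
      a ^ 8 ≤ h := ⟨n₀ + m + 2 * (q + 1) + K + a ^ 8 + 1, by omega, by omega, by omega, by omega,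
    by omega⟩
  have h16 : h ≤ 16 ^ h := (Nat.lt_pow_self (by norm_num)).le
  have hN : 2 ^ h * K ≤ 16 ^ h := by
    calc 2 ^ h * K ≤ 2 ^ h * 8 ^ h :=
          Nat.mul_le_mul_left _ (hKh.trans (Nat.lt_pow_self (by norm_num)).le)
      _ = 16 ^ h := by rw [← mul_pow]; norm_num
  obtain ⟨π, hπ⟩ := exists_expanding_perms (16 ^ h)
  let φ := SimpleGraph.Iso.map (Fintype.equivFin (Vtx h m K (16 ^ h) q)) (linkGraph h m K q π)
  have hn : 16 ^ h ≤ Fintype.card (Vtx h m K (16 ^ h) q) := card_vtx_ge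
  refine ⟨Fintype.card (Vtx h m K (16 ^ h) q), (hn₀.trans h16).trans hn, _,
    φ (.tree (⟨0, Nat.two_pow_pos h⟩, Fin.last m) ⟨0, hK⟩),
    (linkGraph_isExpander hh hq hN hπ).of_iso φ, ?_, ?_⟩
  · refine le_trans (by linarith) (le_diam_percProb φ hp0.le hp1.le hh hKε hε2 ⟨0, hK⟩ ?_)
    have hdiam := diam_le_of_iso φ hh hm hN le_rfl hπ
    set D := SimpleGraph.diam (SimpleGraph.map (Fintype.equivFin (Vtx h m K (16 ^ h) q))
      (linkGraph h m K q π))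
    have h1 : (D : ℝ) ≤ (m + 1) * h + (16 * (q + 2) * h + (m + 2 * (q + 1))) := by
      have : (D : ℝ) ≤ (((m + 1) * h + m + 2 * (8 * h) * (q + 2) + 2 * (q + 1) : ℕ) : ℝ) :=
        Nat.cast_le.2 hdiam
      push_cast at this
      linarith
    have h2 : (m + 2 * (q + 1) : ℝ) ≤ h := by exact_mod_cast hmq
    have h3 := mul_le_mul_of_nonneg_right hmε (Nat.cast_nonneg (α := ℝ) h)
    have h4 : (1 - ε) * (D : ℝ) ≤ (1 - ε₀) * D :=
      mul_le_mul_of_nonneg_right (by linarith) (Nat.cast_nonneg _)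
    have h5 : (D : ℝ) ≤ (1 + ε₀) * ((m + 1) * h) := by linarith
    have h6 := mul_le_mul_of_nonneg_left h5 (show 0 ≤ 1 - ε₀ by linarith)
    have h7 : 0 ≤ ε₀ ^ 2 * (((m : ℝ) + 1) * h) := by positivity
    push_cast
    linarith
  · refine le_trans (by linarith) (le_card_compVerts_percProb φ hp0.le hp1.le hq hpq
      (M := c * 4 ^ h) (by positivity) (ε := ε₀) ?_
      ((Nat.cast_le.2 card_bound_le).trans (mul_pow_le_rpow (hah.trans h16) hn)))
    refine le_trans (le_of_eq ?_) hcε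
    have h1 : (4 : ℝ) ^ h ≠ 0 := by positivity
    have h2 : (16 : ℝ) ^ h = (4 ^ h) ^ 2 := by rw [← pow_mul, mul_comm, pow_mul]; norm_num
    push_cast
    rw [h2]
    field_simp

end Percolation
end
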